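/- Let 0<α, 1<p<N/α, q>p−1, and let μ be a nonnegative Radon measure on ℝ^N. The following statements are equivalent: (a) there exists C1>0 with μ(K) ≤ C1·Cap_{I_{αp}, q/(q−p+1)}(K) for every compact K⊂ℝ^N; (b) there exists C2>0 with ∫_K (W_{α,p}[μ](y))^q dy ≤ C2·Cap_{I_{αp}, q/(q−p+1)}(K) for every compact K⊂ℝ^N; (c) there exists C3>0 with ∫_{ℝ^N} (W_{α,p}[χ_{B_t(x)}μ](y))^q dy ≤ C3·μ(B_t(x)) for every x∈ℝ^N and t>0; (d) there exists C4>0 with W_{α,p}[(W_{α,p}[μ])^q] ≤ C4·W_{α,p}[μ] < ∞ almost everywhere in ℝ^N. -/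

import Mathlib

open MeasureTheory Metric Set Filter Bornology
open scoped ENNReal NNReal Topology RealInnerProductSpace

noncomputable section

/-- Euclidean space `ℝ^N`. -/
abbrev Euc (N : ℕ) : Type := EuclideanSpace ℝ (Fin N)

/-- The `R`-truncated Wolff potential `W^R_{α,p}[μ](x)`; `R = ⊤` gives the full
Wolff potential `W_{α,p}[μ]`. -/
def wolff {N : ℕ} (α p : ℝ) (R : ℝ≥0∞) (μ : Measure (Euc N)) (x : Euc N) : ℝ≥0∞ :=
  ∫⁻ ρ in {ρ : ℝ | 0 < ρ ∧ ENNReal.ofReal ρ < R},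
    (μ (ball x ρ) / ENNReal.ofReal (ρ ^ ((N : ℝ) - α * p))) ^ (1 / (p - 1)) /
      ENNReal.ofReal ρ

/-- The `R`-truncated Riesz potential `I^R_β[μ](x)`; `R = ⊤` gives `I_β[μ]`. -/
def rieszPot {N : ℕ} (β : ℝ) (R : ℝ≥0∞) (μ : Measure (Euc N)) (x : Euc N) : ℝ≥0∞ :=
  ∫⁻ ρ in {ρ : ℝ | 0 < ρ ∧ ENNReal.ofReal ρ < R},
    μ (ball x ρ) / ENNReal.ofReal (ρ ^ ((N : ℝ) - β)) / ENNReal.ofReal ρ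

/-- The Riesz capacity `Cap_{I_α,p}`. -/
def rieszCap (N : ℕ) (α p : ℝ) (O : Set (Euc N)) : ℝ≥0∞ :=
  ⨅ (g : Euc N → ℝ≥0∞) (_ : Measurable g)
    (_ : ∀ x ∈ O, 1 ≤ rieszPot α ⊤ (volume.withDensity g) x),
    ∫⁻ x, g x ^ p

/-- The Bessel kernel of order `α` (up to the normalizing constant `c(N,α)`). -/
def besselKernel (N : ℕ) (α : ℝ) (x : Euc N) : ℝ :=
  ∫ t in Ioi (0 : ℝ),
    Real.exp (-(Real.pi * ‖x‖ ^ 2 / t) - t / (4 * Real.pi)) * t ^ ((α - (N : ℝ)) / 2) / t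

/-- The Bessel capacity `Cap_{G_α,p}`. -/
def besselCap (N : ℕ) (α p : ℝ) (O : Set (Euc N)) : ℝ≥0∞ :=
  ⨅ (g : Euc N → ℝ≥0∞) (_ : Measurable g)
    (_ : ∀ x ∈ O, 1 ≤ ∫⁻ y, ENNReal.ofReal (besselKernel N α (x - y)) * g y),
    ∫⁻ x, g x ^ p

/-- The `R`-truncated fractional maximal function `M^R_γ[μ]`. -/
def fracMax {N : ℕ} (γ : ℝ) (R : ℝ≥0∞) (μ : Measure (Euc N)) (x : Euc N) : ℝ≥0∞ :=
  ⨆ (t : ℝ) (_ : 0 < t) (_ : ENNReal.ofReal t < R),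
    μ (ball x t) / ENNReal.ofReal (t ^ ((N : ℝ) - γ))

/-- The potential `L^R_{α,s}[μ]`. -/
def Lpot {N : ℕ} (α s : ℝ) (R : ℝ≥0∞) (μ : Measure (Euc N)) (x : Euc N) : ℝ≥0∞ :=
  ∫⁻ t in {t : ℝ | 0 < t ∧ ENNReal.ofReal t < R},
    (μ (ball x t) / ENNReal.ofReal (t ^ ((N : ℝ) - α))) ^ s / ENNReal.ofReal t

/-- A mollifier: smooth, nonnegative, supported in the unit ball, of total mass one. -/
def IsMollifier {N : ℕ} (φ : Euc N → ℝ) : Prop :=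
  ContDiff ℝ (⊤ : ℕ∞) φ ∧ (∀ x, 0 ≤ φ x) ∧ tsupport φ ⊆ ball 0 1 ∧ (∫ x, φ x) = 1

/-- The measure with density `φ_n * μ`, where `φ_n(x) = n^N φ(n x)`. -/
def mollified {N : ℕ} (φ : Euc N → ℝ) (n : ℕ) (μ : Measure (Euc N)) : Measure (Euc N) :=
  volume.withDensity fun x =>
    ENNReal.ofReal (∫ y, (n : ℝ) ^ (N : ℕ) * φ ((n : ℝ) • (x - y)) ∂μ)

/-! ### Elementary inequalities in `ℝ≥0∞` -/

lemma ennreal_le_two_mul_of_le_half_add {a b : ℝ≥0∞} (ha : a ≠ ⊤) (h : a ≤ b + a / 2) :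
    a ≤ 2 * b := by
  have h1 : a / 2 + a / 2 ≤ b + a / 2 := by rwa [ENNReal.add_halves]
  have h2 : a / 2 ≠ ⊤ := ENNReal.div_ne_top ha (by norm_num)
  have h3 : a / 2 ≤ b := (ENNReal.add_le_add_iff_right h2).1 h1
  calc a = a / 2 + a / 2 := (ENNReal.add_halves a).symm
    _ ≤ b + b := add_le_add h3 h3
    _ = 2 * b := (two_mul b).symm

lemma ennreal_add_pow_succ_le (x y : ℝ≥0∞) (m : ℕ) :
    (x + y) ^ (m + 1) ≤ x ^ (m + 1) + (m + 1) * (y * (x + y) ^ m) := by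
  induction m with
  | zero => simp
  | succ m ih =>
    calc (x + y) ^ (m + 2) = x * (x + y) ^ (m + 1) + y * (x + y) ^ (m + 1) := by ring
      _ ≤ x * (x ^ (m + 1) + (m + 1) * (y * (x + y) ^ m)) + y * (x + y) ^ (m + 1) := by gcongr
      _ = x ^ (m + 2) + ((m + 1) * (y * (x * (x + y) ^ m)) + y * (x + y) ^ (m + 1)) := by ring
      _ ≤ x ^ (m + 2) + ((m + 1) * (y * ((x + y) * (x + y) ^ m)) + y * (x + y) ^ (m + 1)) := by
          gcongr; exact le_self_add
      _ = _ := by push_cast; ring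

lemma ennreal_sum_pow_succ_le (b : ℕ → ℝ≥0∞) (m n : ℕ) :
    (∑ j ∈ Finset.range n, b j) ^ (m + 1) ≤
      (m + 1) * ∑ j ∈ Finset.range n, b j * (∑ l ∈ Finset.range (j + 1), b l) ^ m := by
  induction n with
  | zero => simp
  | succ n ih =>
    rw [Finset.sum_range_succ]
    refine (ennreal_add_pow_succ_le _ _ m).trans ?_
    rw [Finset.sum_range_succ (fun j => b j * (∑ l ∈ Finset.range (j + 1), b l) ^ m), mul_add]
    rw [Finset.sum_range_succ b n]
    gcongr

lemma ennreal_sum_pow_le_card (b : ℕ → ℝ≥0∞) (m n : ℕ) :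
    (∑ j ∈ Finset.range n, b j) ^ (m + 1) ≤
      (n : ℝ≥0∞) ^ m * ∑ j ∈ Finset.range n, b j ^ (m + 1) := by
  have := ENNReal.rpow_sum_le_const_mul_sum_rpow (Finset.range n) b (p := (m + 1 : ℕ))
    (by push_cast; linarith [Nat.cast_nonneg (α := ℝ) m])
  simpa [← ENNReal.rpow_natCast] using this

lemma ennreal_sq_mul_pow_le (b T : ℝ≥0∞) {K : ℝ≥0∞} (hK : K ≠ 0) (hK' : K ≠ ⊤) (m : ℕ) :
    T ^ m * b * b ≤ K ^ m * b ^ (m + 2) + K⁻¹ * (b * T ^ (m + 1)) := by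
  rcases le_total T (K * b) with h | h
  · refine le_add_right ?_
    calc T ^ m * b * b ≤ (K * b) ^ m * b * b := by gcongr
      _ = _ := by ring
  · refine le_add_left ?_
    have : b ≤ K⁻¹ * T := by
      calc b = K⁻¹ * (K * b) := by rw [← mul_assoc, ENNReal.inv_mul_cancel hK hK', one_mul]
        _ ≤ _ := by gcongr
    calc T ^ m * b * b ≤ T ^ m * b * (K⁻¹ * T) := by gcongr
      _ = _ := by ring

/-! ### A summation principle for sequences with geometric decay in the mean -/

/-- If later terms of a sequence of functions are controlled in the mean by earlier ones, then the
`L^m` norm of the sum is controlled by the `ℓ^m(L^m)` norm of the sequence. -/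
lemma lintegral_sum_pow_le {Ω : Type*} [MeasurableSpace Ω] {P : Measure Ω} (m : ℕ)
    {C : ℝ≥0∞} (hC1 : 1 ≤ C) (hC : C ≠ ⊤) {D : ℕ → ℝ≥0∞} (hD : ∑' i, D i ≤ C) (n : ℕ)
    (b : ℕ → Ω → ℝ≥0∞) (hb : ∀ j, Measurable (b j))
    (h : ∀ l j, l ≤ j →
      ∫⁻ x, (∑ i ∈ Finset.range (l + 1), b i x) ^ m * b l x * b j x ∂P ≤
        D (j - l) * ∫⁻ x, (∑ i ∈ Finset.range (l + 1), b i x) ^ m * b l x * b l x ∂P) :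
    ∫⁻ x, (∑ j ∈ Finset.range n, b j x) ^ (m + 2) ∂P ≤
      (m + 2) * (2 * ((m + 1) * C * (2 * (m + 1) * C) ^ m)) *
        ∑ j ∈ Finset.range n, ∫⁻ x, b j x ^ (m + 2) ∂P := by
  set T : ℕ → Ω → ℝ≥0∞ := fun l x => ∑ i ∈ Finset.range (l + 1), b i x with hT
  have hTm : ∀ l, Measurable (T l) := fun l => Finset.measurable_fun_sum _ fun i _ => hb i
  set A : ℝ≥0∞ := ∑ j ∈ Finset.range n, ∫⁻ x, b j x ^ (m + 2) ∂P with hA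
  set J : ℝ≥0∞ := ∑ j ∈ Finset.range n, ∫⁻ x, b j x * T j x ^ (m + 1) ∂P with hJ
  set K : ℝ≥0∞ := 2 * (m + 1) * C with hK
  have hm1 : (m + 1 : ℝ≥0∞) ≠ 0 := by positivity
  have hm1' : (m + 1 : ℝ≥0∞) ≠ ⊤ := by finiteness
  have hC0 : C ≠ 0 := (lt_of_lt_of_le one_pos hC1).ne'
  have hK0 : K ≠ 0 := by simp [hK, hC0]
  have hKt : K ≠ ⊤ := by rw [hK]; finiteness
  by_cases hAt : A = ⊤
  · rw [hAt, ENNReal.mul_top]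
    · exact le_top
    · simp [hC0, hK0]
  have hSJ : ∫⁻ x, (∑ j ∈ Finset.range n, b j x) ^ (m + 2) ∂P ≤ (m + 2) * J := by
    calc ∫⁻ x, (∑ j ∈ Finset.range n, b j x) ^ (m + 2) ∂P
        ≤ ∫⁻ x, (m + 2) * ∑ j ∈ Finset.range n, b j x * T j x ^ (m + 1) ∂P := by
          refine lintegral_mono fun x => ?_
          refine (ennreal_sum_pow_succ_le (fun j => b j x) (m + 1) n).trans (le_of_eq ?_)
          rw [Nat.cast_add, Nat.cast_one, add_assoc, one_add_one_eq_two]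
      _ = (m + 2) * J := by
          rw [lintegral_const_mul, lintegral_finsetSum]
          · intro i _; exact (hb i).mul ((hTm i).pow_const _)
          · exact Finset.measurable_fun_sum _ fun i _ => (hb i).mul ((hTm i).pow_const _)
  have hJt : J ≠ ⊤ := by
    have hle : J ≤ ∑ j ∈ Finset.range n, (n : ℝ≥0∞) ^ (m + 1) * A := by
      refine Finset.sum_le_sum fun j hj => ?_
      rw [hA, ← lintegral_finsetSum _ fun i _ => (hb i).pow_const _,
        ← lintegral_const_mul _ (Finset.measurable_fun_sum _ fun i _ => (hb i).pow_const _)]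
      refine lintegral_mono fun x => ?_
      refine le_trans ?_ (ennreal_sum_pow_le_card (fun j => b j x) (m + 1) n)
      have h1 : b j x ≤ ∑ i ∈ Finset.range n, b i x :=
        Finset.single_le_sum (f := fun i => b i x) (fun _ _ => zero_le) hj
      have h2 : T j x ≤ ∑ i ∈ Finset.range n, b i x := by
        refine Finset.sum_le_sum_of_subset ?_
        simpa using Finset.mem_range.1 hj
      calc b j x * T j x ^ (m + 1)
          ≤ (∑ i ∈ Finset.range n, b i x) * (∑ i ∈ Finset.range n, b i x) ^ (m + 1) := by gcongr
        _ = _ := by ring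
    refine ne_top_of_le_ne_top ?_ hle
    rw [Finset.sum_const, nsmul_eq_mul]
    finiteness
  have hY : J ≤ (m + 1) * C * ∑ l ∈ Finset.range n, ∫⁻ x, T l x ^ m * b l x * b l x ∂P := by
    calc J ≤ ∑ j ∈ Finset.range n, (m + 1) * ∑ l ∈ Finset.range (j + 1),
          ∫⁻ x, T l x ^ m * b l x * b j x ∂P := by
          refine Finset.sum_le_sum fun j _ => ?_
          have hmeas : ∀ l, Measurable fun x => T l x ^ m * b l x * b j x := fun l =>
            (((hTm l).pow_const _).mul (hb l)).mul (hb j)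
          rw [← lintegral_finsetSum _ fun i _ => hmeas i,
            ← lintegral_const_mul _ (Finset.measurable_fun_sum _ fun i _ => hmeas i)]
          refine lintegral_mono fun x => ?_
          calc b j x * T j x ^ (m + 1)
              ≤ b j x * ((m + 1) * ∑ l ∈ Finset.range (j + 1), b l x * T l x ^ m) := by
                gcongr; exact ennreal_sum_pow_succ_le (fun j => b j x) m (j + 1)
            _ = _ := by
                rw [mul_left_comm, Finset.mul_sum]
                congr 1
                exact Finset.sum_congr rfl fun l _ => by ring
      _ ≤ ∑ j ∈ Finset.range n, (m + 1) * ∑ l ∈ Finset.range (j + 1),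
          D (j - l) * ∫⁻ x, T l x ^ m * b l x * b l x ∂P := by
          gcongr with j hj l hl
          exact h l j (Nat.lt_succ_iff.1 (Finset.mem_range.1 hl))
      _ = (m + 1) * ∑ l ∈ Finset.range n, ∑ j ∈ Finset.Ico l n,
          D (j - l) * ∫⁻ x, T l x ^ m * b l x * b l x ∂P := by
          rw [← Finset.mul_sum]
          congr 1
          refine Finset.sum_comm' fun j l => ?_
          simp only [Finset.mem_range, Finset.mem_Ico]
          omega
      _ ≤ (m + 1) * ∑ l ∈ Finset.range n, C * ∫⁻ x, T l x ^ m * b l x * b l x ∂P := by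
          gcongr with l hl
          rw [← Finset.sum_mul]
          gcongr
          rw [Finset.sum_Ico_eq_sum_range]
          simp only [Nat.add_sub_cancel_left]
          exact (ENNReal.sum_le_tsum _).trans hD
      _ = _ := by rw [← Finset.mul_sum, mul_assoc]
  have hfin : J ≤ (m + 1) * C * K ^ m * A + J / 2 := by
    refine hY.trans ?_
    calc (m + 1) * C * ∑ l ∈ Finset.range n, ∫⁻ x, T l x ^ m * b l x * b l x ∂P
        ≤ (m + 1) * C * ∑ l ∈ Finset.range n, (K ^ m * ∫⁻ x, b l x ^ (m + 2) ∂P +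
            K⁻¹ * ∫⁻ x, b l x * T l x ^ (m + 1) ∂P) := by
          gcongr with l hl
          rw [← lintegral_const_mul _ ((hb l).pow_const _),
            ← lintegral_const_mul K⁻¹ (f := fun x => b l x * T l x ^ (m + 1))
              ((hb l).mul ((hTm l).pow_const _)),
            ← lintegral_add_left (((hb l).pow_const _).const_mul _)]
          exact lintegral_mono fun x => ennreal_sq_mul_pow_le _ _ hK0 hKt m
      _ = (m + 1) * C * K ^ m * A + ((m + 1) * C) * K⁻¹ * J := by
          rw [Finset.sum_add_distrib, ← Finset.mul_sum, ← Finset.mul_sum]; ring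
      _ = _ := by
          congr 1
          have : ((m + 1 : ℝ≥0∞) * C) * K⁻¹ = 2⁻¹ := by
            have h0 : (m + 1 : ℝ≥0∞) * C ≠ 0 := mul_ne_zero hm1 hC0
            have ht : (m + 1 : ℝ≥0∞) * C ≠ ⊤ := ENNReal.mul_ne_top hm1' hC
            rw [hK, mul_assoc 2, ENNReal.mul_inv (by simp) (by simp), mul_left_comm,
              ENNReal.mul_inv_cancel h0 ht, mul_one]
          rw [this, ENNReal.div_eq_inv_mul]
  have := ennreal_le_two_mul_of_le_half_add hJt hfin
  calc _ ≤ (m + 2) * J := hSJ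
    _ ≤ (m + 2) * (2 * ((m + 1) * C * K ^ m * A)) := by gcongr
    _ = _ := by ring

/-- Under the assumptions of `lintegral_sum_pow_le`, the `ℓ^m(L^m)` norm is controlled by the
`L^m` norm of the supremum. -/
lemma sum_lintegral_pow_le_sup {Ω : Type*} [MeasurableSpace Ω] {P : Measure Ω} (m : ℕ)
    {C : ℝ≥0∞} (hC1 : 1 ≤ C) (hC : C ≠ ⊤) {D : ℕ → ℝ≥0∞} (hD : ∑' i, D i ≤ C) :
    ∃ C' : ℝ≥0∞, C' ≠ ⊤ ∧ ∀ (n : ℕ)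
    (b : ℕ → Ω → ℝ≥0∞) (_ : ∀ j, Measurable (b j))
    (_ : ∀ l j, l ≤ j →
      ∫⁻ x, (∑ i ∈ Finset.range (l + 1), b i x) ^ m * b l x * b j x ∂P ≤
        D (j - l) * ∫⁻ x, (∑ i ∈ Finset.range (l + 1), b i x) ^ m * b l x * b l x ∂P)
    (M : Ω → ℝ≥0∞) (_ : ∀ j < n, ∀ x, b j x ≤ M x),
    ∑ j ∈ Finset.range n, ∫⁻ x, b j x ^ (m + 2) ∂P ≤ C' * ∫⁻ x, M x ^ (m + 2) ∂P := by
  set B : ℝ≥0∞ := (m + 2) * (2 * ((m + 1) * C * (2 * (m + 1) * C) ^ m)) with hB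
  have hBt : B ≠ ⊤ := by rw [hB]; finiteness
  have hC0 : C ≠ 0 := (lt_of_lt_of_le one_pos hC1).ne'
  have hB0 : B ≠ 0 := by simp [hB, hC0]
  refine ⟨2 * (2 * B), by finiteness, fun n b hb h M hM => ?_⟩
  set A : ℝ≥0∞ := ∑ j ∈ Finset.range n, ∫⁻ x, b j x ^ (m + 2) ∂P with hA
  have hS := lintegral_sum_pow_le m hC1 hC hD n b hb h
  by_cases hMt : ∫⁻ x, M x ^ (m + 2) ∂P = ⊤
  · rw [hMt, ENNReal.mul_top (by simp [hB0])]; exact le_top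
  have hAt : A ≠ ⊤ := by
    have : A ≤ ∑ j ∈ Finset.range n, ∫⁻ x, M x ^ (m + 2) ∂P := by
      refine Finset.sum_le_sum fun j hj => lintegral_mono fun x => ?_
      have := hM j (Finset.mem_range.1 hj) x
      dsimp only
      gcongr
    refine ne_top_of_le_ne_top ?_ this
    rw [Finset.sum_const, nsmul_eq_mul]; finiteness
  set ε : ℝ≥0∞ := (2 * B)⁻¹ with hε
  have hε0 : ε ≠ 0 := by rw [hε]; exact ENNReal.inv_ne_zero.2 (by finiteness)
  have hεt : ε ≠ ⊤ := by rw [hε]; exact ENNReal.inv_ne_top.2 (by simp [hB0])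
  rw [mul_assoc]
  refine ennreal_le_two_mul_of_le_half_add hAt ?_
  have key : ∀ x, ∑ j ∈ Finset.range n, b j x ^ (m + 2) ≤
      (2 * B) * M x ^ (m + 2) + ε * (∑ j ∈ Finset.range n, b j x) ^ (m + 2) := by
    intro x
    set U := ∑ j ∈ Finset.range n, b j x with hU
    have hsup : ∑ j ∈ Finset.range n, b j x ^ (m + 2) ≤ (min (M x) U) ^ (m + 1) * U := by
      rw [hU, Finset.mul_sum]
      refine Finset.sum_le_sum fun j hj => ?_
      rw [pow_succ]
      have h1 : b j x ≤ min (M x) U := le_min (hM j (Finset.mem_range.1 hj) x)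
        (Finset.single_le_sum (f := fun i => b i x) (fun _ _ => zero_le) hj)
      gcongr
    refine hsup.trans ?_
    rcases le_total U ((2 * B) * M x) with h1 | h1
    · refine le_add_right ?_
      calc min (M x) U ^ (m + 1) * U ≤ (M x) ^ (m + 1) * ((2 * B) * M x) := by
            gcongr; exact min_le_left _ _
        _ = _ := by ring
    · refine le_add_left ?_
      have h2 : M x ≤ ε * U := by
        calc M x = ε * ((2 * B) * M x) := by
              rw [hε, ← mul_assoc, ENNReal.inv_mul_cancel (by simp [hB0]) (by finiteness), one_mul]
          _ ≤ _ := by gcongr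
      calc min (M x) U ^ (m + 1) * U = min (M x) U * min (M x) U ^ m * U := by ring
        _ ≤ (ε * U) * U ^ m * U := by
            gcongr
            · exact (min_le_left _ _).trans h2
            · exact min_le_right _ _
        _ = _ := by ring
  calc A = ∫⁻ x, ∑ j ∈ Finset.range n, b j x ^ (m + 2) ∂P :=
        (lintegral_finsetSum _ fun i _ => (hb i).pow_const _).symm
    _ ≤ ∫⁻ x, (2 * B) * M x ^ (m + 2) + ε * (∑ j ∈ Finset.range n, b j x) ^ (m + 2) ∂P :=
        lintegral_mono key
    _ = (2 * B) * ∫⁻ x, M x ^ (m + 2) ∂P +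
        ε * ∫⁻ x, (∑ j ∈ Finset.range n, b j x) ^ (m + 2) ∂P := by
        have hm : Measurable fun x => (∑ j ∈ Finset.range n, b j x) ^ (m + 2) :=
          (Finset.measurable_fun_sum _ fun i _ => hb i).pow_const _
        rw [lintegral_add_right _ (hm.const_mul _), lintegral_const_mul _ hm,
          lintegral_const_mul' _ _ (by finiteness)]
    _ ≤ (2 * B) * ∫⁻ x, M x ^ (m + 2) ∂P + ε * (B * A) := by gcongr
    _ = _ := by
        congr 1
        rw [← mul_assoc, hε, ENNReal.mul_inv (by simp) (by simp), mul_assoc (2⁻¹ : ℝ≥0∞),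
          ENNReal.inv_mul_cancel hB0 hBt, mul_one, ENNReal.div_eq_inv_mul]

/-! ### Dyadic cells -/

section Cells

variable {N : ℕ}

/-- The index of the dyadic cell of side `2 ^ (-k)` containing `x`. -/
def cell (k : ℤ) (x : Euc N) : Fin N → ℤ := fun i => ⌊x i * (2 : ℝ) ^ k⌋

/-- The union of the dyadic cells of generation `k` at index distance at most `r` from that
of `x`. -/
def nbhd (r : ℕ) (k : ℤ) (x : Euc N) : Set (Euc N) := {y | ∀ i, |cell k y i - cell k x i| ≤ r}

/-- A function is constant on each dyadic cell of generation `k`. -/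
def CellConst {β : Type*} (k : ℤ) (h : Euc N → β) : Prop :=
  ∀ ⦃x y⦄, cell k x = cell k y → h x = h y

lemma measurable_cell (k : ℤ) : Measurable (cell k : Euc N → Fin N → ℤ) := by
  refine measurable_pi_lambda _ fun i => ?_
  exact Int.measurable_floor.comp (by fun_prop)

lemma CellConst.measurable {β : Type*} [MeasurableSpace β] {k : ℤ} {h : Euc N → β}
    (hh : CellConst k h) : Measurable h := by
  have : h = (Function.extend (cell k) h fun _ => h 0) ∘ cell k :=
    (Function.FactorsThrough.extend_comp (f := cell k) (g := h) _ hh).symm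
  rw [this]
  exact (Measurable.of_discrete).comp (measurable_cell k)

lemma mem_nbhd_comm {r : ℕ} {k : ℤ} {x y : Euc N} : y ∈ nbhd r k x ↔ x ∈ nbhd r k y := by
  simp only [nbhd, mem_ofPred_eq]
  exact forall_congr' fun i => by rw [abs_sub_comm]

lemma mem_nbhd_zero {k : ℤ} {x y : Euc N} : y ∈ nbhd 0 k x ↔ cell k y = cell k x := by
  simp [nbhd, funext_iff, sub_eq_zero]

lemma nbhd_cellConst (r : ℕ) (k : ℤ) : CellConst k (nbhd r k : Euc N → Set (Euc N)) := by
  intro x y h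
  simp [nbhd, h]

lemma measurableSet_nbhd (r : ℕ) (k : ℤ) (x : Euc N) : MeasurableSet (nbhd r k x) := by
  have : nbhd r k x = cell k ⁻¹' {c | ∀ i, |c i - cell k x i| ≤ r} := rfl
  rw [this]
  exact measurable_cell k (MeasurableSet.of_discrete)

lemma measurableSet_nbhd_prod (r : ℕ) (k : ℤ) :
    MeasurableSet {z : Euc N × Euc N | z.2 ∈ nbhd r k z.1} := by
  have : {z : Euc N × Euc N | z.2 ∈ nbhd r k z.1} =
      (fun z => (cell k z.1, cell k z.2)) ⁻¹'
        {c : (Fin N → ℤ) × (Fin N → ℤ) | ∀ i, |c.2 i - c.1 i| ≤ r} := rfl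
  rw [this]
  exact (((measurable_cell k).comp measurable_fst).prodMk
    ((measurable_cell k).comp measurable_snd)) (MeasurableSet.of_discrete)

lemma cell_sub_one (k : ℤ) (x : Euc N) (i : Fin N) : cell (k - 1) x i = cell k x i / 2 := by
  have h : x i * (2 : ℝ) ^ (k - 1) = x i * (2 : ℝ) ^ k / (2 : ℕ) := by
    rw [zpow_sub_one₀ two_ne_zero]; push_cast; ring
  simp only [cell, h]
  rw [Int.floor_div_natCast]
  norm_num

lemma nbhd_subset_sub_one {r : ℕ} (k : ℤ) (x : Euc N) :
    nbhd r k x ⊆ nbhd r (k - 1) x := by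
  intro y hy i
  have := hy i
  rw [cell_sub_one, cell_sub_one]
  rw [abs_le] at this ⊢
  omega

lemma nbhd_subset_of_le {r : ℕ} {k i : ℤ} (h : k ≤ i) (x : Euc N) :
    nbhd r i x ⊆ nbhd r k x := by
  induction i, h using Int.leInduction with
  | base => exact subset_rfl
  | succ i hi ih =>
    refine subset_trans ?_ ih
    have := nbhd_subset_sub_one (r := r) (i + 1) x
    simpa using this

lemma CellConst.mono {β : Type*} {k i : ℤ} {h : Euc N → β} (hh : CellConst k h) (hk : k ≤ i) :
    CellConst i h := by
  intro x y hxy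
  exact hh (mem_nbhd_zero.1 (nbhd_subset_of_le hk y (mem_nbhd_zero.2 hxy)))

lemma nbhd_eq_preimage (r : ℕ) (k : ℤ) (x : Euc N) :
    nbhd r k x = (MeasurableEquiv.toLp 2 (Fin N → ℝ)).symm ⁻¹'
      (Set.univ.pi fun i => Set.Ico (((cell k x i - r : ℤ) : ℝ) * (2 : ℝ) ^ (-k))
        (((cell k x i + r + 1 : ℤ) : ℝ) * (2 : ℝ) ^ (-k))) := by
  ext y
  have h2 : (0 : ℝ) < (2 : ℝ) ^ k := by positivity
  simp only [nbhd, mem_ofPred_eq, mem_preimage, mem_univ_pi, mem_Ico]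
  refine forall_congr' fun i => ?_
  rw [zpow_neg, ← div_eq_mul_inv, ← div_eq_mul_inv, div_le_iff₀ h2, lt_div_iff₀ h2]
  rw [← Int.le_floor, ← Int.floor_lt]
  change _ ↔ cell k x i - r ≤ cell k y i ∧ cell k y i < cell k x i + r + 1
  rw [abs_le]
  omega

/-- Powers of two with real exponent. -/
def twoPow (t : ℝ) : ℝ≥0∞ := (2 : ℝ≥0∞) ^ t

lemma twoPow_add (a b : ℝ) : twoPow (a + b) = twoPow a * twoPow b :=
  ENNReal.rpow_add _ _ two_ne_zero ENNReal.ofNat_ne_top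

lemma twoPow_zero : twoPow 0 = 1 := ENNReal.rpow_zero

lemma twoPow_ne_zero (a : ℝ) : twoPow a ≠ 0 := by simp [twoPow]

lemma twoPow_ne_top (a : ℝ) : twoPow a ≠ ⊤ := by
  simp [twoPow, ENNReal.rpow_eq_top_iff]

lemma twoPow_rpow (a t : ℝ) : twoPow a ^ t = twoPow (a * t) :=
  (ENNReal.rpow_mul _ _ _).symm

lemma twoPow_neg (a : ℝ) : twoPow (-a) = (twoPow a)⁻¹ := ENNReal.rpow_neg _ _

lemma twoPow_mul_twoPow_neg (a : ℝ) : twoPow a * twoPow (-a) = 1 := by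
  rw [← twoPow_add, add_neg_cancel, twoPow_zero]

lemma twoPow_eq_ofReal (a : ℝ) : twoPow a = ENNReal.ofReal ((2 : ℝ) ^ a) := by
  rw [← ENNReal.ofReal_rpow_of_pos two_pos]; simp [twoPow]

lemma volume_nbhd (r : ℕ) (k : ℤ) (x : Euc N) :
    volume (nbhd r k x) = (2 * r + 1 : ℝ≥0∞) ^ N * twoPow (-(k * N)) := by
  rw [nbhd_eq_preimage, (EuclideanSpace.volume_preserving_symm_measurableEquiv_toLp
    (Fin N)).measure_preimage_equiv, Real.volume_pi_Ico]
  have : ∀ i : Fin N, ENNReal.ofReal (((cell k x i + r + 1 : ℤ) : ℝ) * (2 : ℝ) ^ (-k) -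
      ((cell k x i - r : ℤ) : ℝ) * (2 : ℝ) ^ (-k)) = (2 * r + 1 : ℝ≥0∞) * twoPow (-k) := by
    intro i
    have h1 : ((cell k x i + r + 1 : ℤ) : ℝ) * (2 : ℝ) ^ (-k) -
      ((cell k x i - r : ℤ) : ℝ) * (2 : ℝ) ^ (-k) = (2 * r + 1) * (2 : ℝ) ^ (-k) := by
      push_cast; ring
    rw [h1, ENNReal.ofReal_mul (by positivity), twoPow_eq_ofReal]
    congr 1
    · rw [ENNReal.ofReal_add (by positivity) (by positivity), ENNReal.ofReal_mul (by positivity)]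
      simp
    · congr 1
      rw [← Real.rpow_intCast]; push_cast; rfl
  simp only [this, Finset.prod_const, Finset.card_univ, Fintype.card_fin, mul_pow]
  congr 1
  rw [← ENNReal.rpow_natCast, twoPow_rpow]
  ring_nf

lemma volume_nbhd_zero (k : ℤ) (x : Euc N) :
    volume (nbhd 0 k x) = twoPow (-(k * N)) := by
  rw [volume_nbhd]; simp

lemma lintegral_setLIntegral_nbhd_swap (ν ρ : Measure (Euc N)) [SFinite ν] [SFinite ρ]
    {f h : Euc N → ℝ≥0∞} (hf : Measurable f) (hh : Measurable h) (r : ℕ) (k : ℤ) :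
    ∫⁻ x, h x * ∫⁻ y in nbhd r k x, f y ∂ν ∂ρ =
      ∫⁻ y, f y * ∫⁻ x in nbhd r k y, h x ∂ρ ∂ν := by
  have hS := measurableSet_nbhd_prod (N := N) r k
  have h1 : ∀ x, h x * ∫⁻ y in nbhd r k x, f y ∂ν =
      ∫⁻ y, {z : Euc N × Euc N | z.2 ∈ nbhd r k z.1}.indicator
        (fun z => h z.1 * f z.2) (x, y) ∂ν := by
    intro x
    rw [← lintegral_indicator (measurableSet_nbhd r k x), ← lintegral_const_mul]
    · refine lintegral_congr fun y => ?_
      by_cases hy : y ∈ nbhd r k x <;> simp [hy]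
    · exact hf.indicator (measurableSet_nbhd r k x)
  have h2 : ∀ y, f y * ∫⁻ x in nbhd r k y, h x ∂ρ =
      ∫⁻ x, {z : Euc N × Euc N | z.2 ∈ nbhd r k z.1}.indicator
        (fun z => h z.1 * f z.2) (x, y) ∂ρ := by
    intro y
    rw [← lintegral_indicator (measurableSet_nbhd r k y), ← lintegral_const_mul]
    · refine lintegral_congr fun x => ?_
      by_cases hy : y ∈ nbhd r k x
      · simp [hy, mem_nbhd_comm.1 hy, mul_comm]
      · have : x ∉ nbhd r k y := fun h' => hy (mem_nbhd_comm.1 h')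
        simp [hy, this]
    · exact hh.indicator (measurableSet_nbhd r k y)
  simp_rw [h1, h2]
  rw [lintegral_lintegral_swap]
  exact (((hh.comp measurable_fst).mul (hf.comp measurable_snd)).indicator hS).aemeasurable

lemma setLIntegral_nbhd_zero_of_cellConst {h : Euc N → ℝ≥0∞} {k : ℤ} (hh : CellConst k h)
    (ρ : Measure (Euc N)) (x : Euc N) :
    ∫⁻ y in nbhd 0 k x, h y ∂ρ = h x * ρ (nbhd 0 k x) := by
  rw [setLIntegral_congr_fun (g := fun _ => h x) (measurableSet_nbhd 0 k x)
    (fun y hy => hh (mem_nbhd_zero.1 hy))]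
  simp

/-- Averaging over cells against a cellwise constant weight. -/
lemma lintegral_cellConst_mul_setLIntegral (ν : Measure (Euc N)) [SFinite ν]
    {f h : Euc N → ℝ≥0∞} (hf : Measurable f) {k : ℤ} (hh : CellConst k h) :
    ∫⁻ x, h x * ∫⁻ y in nbhd 0 k x, f y ∂ν = twoPow (-(k * N)) * ∫⁻ y, h y * f y ∂ν := by
  rw [lintegral_setLIntegral_nbhd_swap ν volume hf hh.measurable,
    ← lintegral_const_mul _ (f := fun y => h y * f y) (hh.measurable.mul hf)]
  refine lintegral_congr fun y => ?_
  rw [setLIntegral_nbhd_zero_of_cellConst hh, volume_nbhd_zero]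
  ring

/-- The normalized mass `2 ^ (k γ) ν(Q)` of the dyadic neighbourhoods of generation `k`. -/
def dens (γ : ℝ) (r : ℕ) (ν : Measure (Euc N)) (k : ℤ) (x : Euc N) : ℝ≥0∞ :=
  ν (nbhd r k x) * twoPow (k * γ)

lemma dens_cellConst (γ : ℝ) (r : ℕ) (ν : Measure (Euc N)) (k : ℤ) :
    CellConst k (dens γ r ν k) := by
  intro x y h
  simp [dens, nbhd_cellConst r k h]

lemma dens_mono_measure {γ : ℝ} {r : ℕ} {ν ν' : Measure (Euc N)} (h : ν ≤ ν') (k : ℤ)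
    (x : Euc N) : dens γ r ν k x ≤ dens γ r ν' k x := by
  unfold dens; gcongr

/-- The weight whose `ν`-integral is the `s`-th power integral of `dens`. -/
def wdens (γ s : ℝ) (ν : Measure (Euc N)) (k : ℤ) (x : Euc N) : ℝ≥0∞ :=
  dens γ 0 ν k x ^ (s - 1) * twoPow (k * (γ - N))

lemma wdens_cellConst (γ s : ℝ) (ν : Measure (Euc N)) (k : ℤ) :
    CellConst k (wdens γ s ν k) := by
  intro x y h
  simp [wdens, dens_cellConst γ 0 ν k h]

lemma lintegral_mul_dens_rpow (ν : Measure (Euc N)) [SFinite ν] {γ s : ℝ} (hs : 1 ≤ s)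
    {h : Euc N → ℝ≥0∞} {k : ℤ} (hh : CellConst k h) :
    ∫⁻ x, h x * dens γ 0 ν k x ^ s = ∫⁻ x, h x * wdens γ s ν k x ∂ν := by
  have h1 : CellConst k fun x => h x * wdens γ s ν k x := fun x y hxy => by
    simp [hh hxy, wdens_cellConst γ s ν k hxy]
  have h2 := lintegral_cellConst_mul_setLIntegral ν (f := fun _ => 1) measurable_const h1
  simp only [lintegral_const, MeasurableSet.univ, Measure.restrict_apply, univ_inter, one_mul,
    mul_one] at h2
  have h3 : ∫⁻ x, h x * wdens γ s ν k x ∂ν =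
      twoPow (k * N) * (twoPow (-(k * N)) * ∫⁻ x, h x * wdens γ s ν k x ∂ν) := by
    rw [← mul_assoc, twoPow_mul_twoPow_neg, one_mul]
  rw [h3, ← h2, ← lintegral_const_mul]
  · refine lintegral_congr fun x => ?_
    have e : s = (s - 1) + 1 := by ring
    conv_lhs => rw [e, ENNReal.rpow_add_of_nonneg _ _ (by linarith) zero_le_one]
    rw [wdens, ENNReal.rpow_one]
    have : twoPow (k * γ) = twoPow (k * N) * twoPow (k * (γ - N)) := by
      rw [← twoPow_add]; ring_nf
    conv_lhs => rw [dens, this]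
    rw [dens, this]
    ring
  · have h4 : CellConst k fun x => h x * wdens γ s ν k x * ν (nbhd 0 k x) := fun x y hxy => by
      simp [h1 hxy, nbhd_cellConst 0 k hxy]
    exact h4.measurable

end Cells

/-! ### Dyadic Carleson estimates -/

section Carleson

variable {N : ℕ}

lemma lintegral_rpow_le_rpow_lintegral {Ω : Type*} [MeasurableSpace Ω] (P : Measure Ω)
    [IsProbabilityMeasure P] {f : Ω → ℝ≥0∞} (hf : Measurable f) {τ : ℝ} (h0 : 0 < τ)
    (h1 : τ ≤ 1) : ∫⁻ x, f x ^ τ ∂P ≤ (∫⁻ x, f x ∂P) ^ τ := by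
  have h := eLpNorm'_le_eLpNorm'_of_exponent_le h0 h1 P hf.aestronglyMeasurable
  simp only [eLpNorm', enorm_eq_self, ENNReal.rpow_one, div_one] at h
  have h2 := ENNReal.rpow_le_rpow h h0.le
  rwa [← ENNReal.rpow_mul, one_div, inv_mul_cancel₀ h0.ne', ENNReal.rpow_one] at h2

lemma isProbabilityMeasure_smul_restrict_nbhd (k : ℤ) (x : Euc N) :
    IsProbabilityMeasure (twoPow (k * N) • (volume : Measure (Euc N)).restrict (nbhd 0 k x)) := by
  constructor
  simp [volume_nbhd_zero, twoPow_mul_twoPow_neg]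

lemma average_dens_le (ν : Measure (Euc N)) [SFinite ν] (γ : ℝ) (r : ℕ) {k i : ℤ} (hki : k ≤ i)
    (x : Euc N) :
    twoPow (k * N) * ∫⁻ z in nbhd 0 k x, dens γ r ν i z ≤
      (2 * r + 1 : ℝ≥0∞) ^ N * twoPow (-((i - k) * (N - γ))) * dens γ r ν k x := by
  have h1 := lintegral_setLIntegral_nbhd_swap ν volume (f := fun _ => 1)
    (h := (nbhd 0 k x).indicator fun _ => 1) measurable_const
    (measurable_const.indicator (measurableSet_nbhd 0 k x)) r i
  have h2 : ∫⁻ z in nbhd 0 k x, dens γ r ν i z = twoPow (i * γ) *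
      ∫⁻ x_1, (nbhd 0 k x).indicator (fun _ => 1) x_1 * ∫⁻ _ in nbhd r i x_1, 1 ∂ν := by
    rw [← lintegral_const_mul', ← lintegral_indicator (measurableSet_nbhd 0 k x)]
    · refine lintegral_congr fun z => ?_
      by_cases hz : z ∈ nbhd 0 k x <;> simp [hz, dens, mul_comm]
    · exact twoPow_ne_top _
  have h3 : ∫⁻ y, 1 * ∫⁻ z in nbhd r i y, (nbhd 0 k x).indicator (fun _ => 1) z ∂volume ∂ν ≤
      ν (nbhd r k x) * ((2 * r + 1 : ℝ≥0∞) ^ N * twoPow (-(i * N))) := by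
    rw [mul_comm, ← lintegral_indicator_const (measurableSet_nbhd r k x)]
    refine lintegral_mono fun y => ?_
    rw [one_mul, lintegral_indicator_const (measurableSet_nbhd 0 k x), one_mul,
      Measure.restrict_apply (measurableSet_nbhd 0 k x)]
    by_cases hy : y ∈ nbhd r k x
    · rw [indicator_of_mem hy, ← volume_nbhd r i y]
      exact measure_mono inter_subset_right
    · suffices nbhd 0 k x ∩ nbhd r i y = ∅ by simp [this]
      rw [eq_empty_iff_forall_notMem]
      rintro z ⟨hz1, hz2⟩
      apply hy
      have hz3 := nbhd_subset_of_le hki y hz2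
      have := nbhd_cellConst r k (mem_nbhd_zero.1 hz1)
      rw [← this]
      exact mem_nbhd_comm.1 hz3
  rw [h2, h1]
  calc twoPow (k * N) * (twoPow (i * γ) * ∫⁻ y, 1 * ∫⁻ z in nbhd r i y,
          (nbhd 0 k x).indicator (fun _ => 1) z ∂volume ∂ν)
      ≤ twoPow (k * N) * (twoPow (i * γ) *
          (ν (nbhd r k x) * ((2 * r + 1 : ℝ≥0∞) ^ N * twoPow (-(i * N))))) := by gcongr
    _ = (2 * r + 1 : ℝ≥0∞) ^ N * (twoPow (k * N) * twoPow (i * γ) * twoPow (-(i * N))) *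
          ν (nbhd r k x) := by ring
    _ = _ := by
      have e : twoPow (k * N) * twoPow (i * γ) * twoPow (-(i * N)) =
          twoPow (-((i - k) * (N - γ))) * twoPow (k * γ) := by
        rw [← twoPow_add, ← twoPow_add, ← twoPow_add]; ring_nf
      rw [e]; simp only [dens]; ring

lemma average_dens_rpow_le (ν : Measure (Euc N)) [SFinite ν] (γ : ℝ) (r : ℕ) {k i : ℤ}
    (hki : k ≤ i) {τ : ℝ} (h0 : 0 < τ) (h1 : τ ≤ 1) (x : Euc N) :
    twoPow (k * N) * ∫⁻ z in nbhd 0 k x, dens γ r ν i z ^ τ ≤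
      ((2 * r + 1 : ℝ≥0∞) ^ N * twoPow (-((i - k) * (N - γ)))) ^ τ * dens γ r ν k x ^ τ := by
  have := isProbabilityMeasure_smul_restrict_nbhd k x
  have h := lintegral_rpow_le_rpow_lintegral
    (twoPow (k * N) • (volume : Measure (Euc N)).restrict (nbhd 0 k x))
    (dens_cellConst γ r ν i).measurable h0 h1
  rw [lintegral_smul_measure, lintegral_smul_measure, smul_eq_mul, smul_eq_mul] at h
  refine h.trans ?_
  rw [← ENNReal.mul_rpow_of_nonneg _ _ h0.le]
  exact ENNReal.rpow_le_rpow (average_dens_le ν γ r hki x) h0.le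

lemma lintegral_mul_dens_rpow_le (ν : Measure (Euc N)) [SFinite ν] (γ : ℝ) (r : ℕ) {k i : ℤ}
    (hki : k ≤ i) {τ : ℝ} (h0 : 0 < τ) (h1 : τ ≤ 1) {h : Euc N → ℝ≥0∞} (hh : CellConst k h) :
    ∫⁻ x, h x * dens γ r ν i x ^ τ ≤
      ((2 * r + 1 : ℝ≥0∞) ^ N * twoPow (-((i - k) * (N - γ)))) ^ τ *
        ∫⁻ x, h x * dens γ r ν k x ^ τ := by
  have hm : Measurable fun x => dens γ r ν i x ^ τ :=
    (dens_cellConst γ r ν i).measurable.pow_const τ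
  have e := lintegral_cellConst_mul_setLIntegral volume hm hh
  have e2 : ∫⁻ x, h x * dens γ r ν i x ^ τ =
      ∫⁻ x, h x * (twoPow (k * N) * ∫⁻ z in nbhd 0 k x, dens γ r ν i z ^ τ) := by
    calc _ = twoPow (k * N) * (twoPow (-(k * N)) * ∫⁻ x, h x * dens γ r ν i x ^ τ) := by
          rw [← mul_assoc, twoPow_mul_twoPow_neg, one_mul]
      _ = _ := by
          rw [← e, ← lintegral_const_mul' _ _ (twoPow_ne_top _)]
          exact lintegral_congr fun x => by ring
  rw [e2, ← lintegral_const_mul _ (f := fun x => h x * dens γ r ν k x ^ τ)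
    (hh.measurable.mul ((dens_cellConst γ r ν k).measurable.pow_const τ))]
  refine lintegral_mono fun x => ?_
  calc _ ≤ h x * (((2 * r + 1 : ℝ≥0∞) ^ N * twoPow (-((i - k) * (N - γ)))) ^ τ *
        dens γ r ν k x ^ τ) :=
          mul_le_mul_right (average_dens_rpow_le ν γ r hki h0 h1 x) _
    _ = _ := by ring

/-- The decay factor in the Carleson estimate. -/
def decay (N : ℕ) (γ : ℝ) (r : ℕ) (τ : ℝ) (j : ℕ) : ℝ≥0∞ :=
  ((2 * r + 1 : ℝ≥0∞) ^ N * twoPow (-(j * (N - γ)))) ^ τ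

lemma tsum_twoPow_ne_top {t : ℝ} (ht : 0 < t) : ∑' j : ℕ, twoPow (-(j * t)) ≠ ⊤ := by
  have h : ∀ j : ℕ, twoPow (-(j * t)) = twoPow (-t) ^ j := fun j => by
    rw [← ENNReal.rpow_natCast, twoPow_rpow]; ring_nf
  simp_rw [h]
  rw [ENNReal.tsum_geometric]
  have : twoPow (-t) < 1 := by
    rw [twoPow]
    exact ENNReal.rpow_lt_one_of_one_lt_of_neg (by norm_num) (by linarith)
  simp [tsub_eq_zero_iff_le, this]

lemma tsum_decay_ne_top {γ : ℝ} (hγ : γ < N) (r : ℕ) {τ : ℝ} (h0 : 0 < τ) :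
    ∑' j, decay N γ r τ j ≠ ⊤ := by
  have h : ∀ j : ℕ, decay N γ r τ j =
      ((2 * r + 1 : ℝ≥0∞) ^ N) ^ τ * twoPow (-(j * ((N - γ) * τ))) := fun j => by
    rw [decay, ENNReal.mul_rpow_of_nonneg _ _ h0.le, twoPow_rpow]; ring_nf
  simp_rw [h]
  rw [ENNReal.tsum_mul_left]
  refine ENNReal.mul_ne_top (ENNReal.rpow_ne_top_of_nonneg h0.le (by finiteness)) ?_
  exact tsum_twoPow_ne_top (by have : 0 < (N : ℝ) - γ := by linarith
                               positivity)

lemma cellConst_pow_mul {k : ℤ} {f g : Euc N → ℝ≥0∞} (hf : CellConst k f) (hg : CellConst k g)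
    (m : ℕ) : CellConst k fun x => f x ^ m * g x := fun x y h => by simp [hf h, hg h]

lemma cellConst_indicator {k : ℤ} {f : Euc N → ℝ≥0∞} (hf : CellConst k f) {G : Set (Euc N)}
    (hG : CellConst k (· ∈ G)) : CellConst k (G.indicator f) := fun x y h => by
  have h1 := hG h
  simp only [eq_iff_iff] at h1
  by_cases hx : x ∈ G
  · simp [hx, h1.1 hx, hf h]
  · have : y ∉ G := fun h' => hx (h1.2 h')
    simp [hx, this]

lemma cellConst_sum {k : ℤ} {f : ℕ → Euc N → ℝ≥0∞} {s : Finset ℕ}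
    (hf : ∀ i ∈ s, CellConst k (f i)) : CellConst k fun x => ∑ i ∈ s, f i x :=
  fun _ _ h => Finset.sum_congr rfl fun i hi => hf i hi h

lemma carleson_condition (ν : Measure (Euc N)) [SFinite ν] (γ : ℝ) (r : ℕ) {τ : ℝ} (h0 : 0 < τ)
    (h1 : τ ≤ 1) (L : ℤ) (G : ℕ → Set (Euc N)) (hG : ∀ j : ℕ, CellConst (j - L) (· ∈ G j))
    (m l j : ℕ) (hlj : l ≤ j) :
    ∫⁻ x, (∑ i ∈ Finset.range (l + 1), (G i).indicator (fun x => dens γ r ν (i - L) x ^ τ) x) ^ m *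
        (G l).indicator (fun x => dens γ r ν (l - L) x ^ τ) x *
        (G j).indicator (fun x => dens γ r ν (j - L) x ^ τ) x ≤
      decay N γ r τ (j - l) *
      ∫⁻ x, (∑ i ∈ Finset.range (l + 1),
          (G i).indicator (fun x => dens γ r ν (i - L) x ^ τ) x) ^ m *
        (G l).indicator (fun x => dens γ r ν (l - L) x ^ τ) x *
        (G l).indicator (fun x => dens γ r ν (l - L) x ^ τ) x := by
  have hb : ∀ i : ℕ, CellConst (i - L) ((G i).indicator (fun x => dens γ r ν (i - L) x ^ τ)) :=
    fun i => cellConst_indicator (fun x y h => by simp [dens_cellConst γ r ν (i - L) h]) (hG i)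
  have hS : CellConst (l - L) fun x => ∑ i ∈ Finset.range (l + 1),
      (G i).indicator (fun x => dens γ r ν (i - L) x ^ τ) x :=
    cellConst_sum fun i hi => (hb i).mono (by simp at hi; omega)
  have key := lintegral_mul_dens_rpow_le ν γ r (k := l - L) (i := j - L) (by omega) h0 h1
    (cellConst_pow_mul hS (hb l) m)
  have e : ((((j : ℤ) - L : ℤ) : ℝ) - (((l : ℤ) - L : ℤ) : ℝ)) = ((j - l : ℕ) : ℝ) := by
    push_cast [Nat.cast_sub hlj]; ring
  rw [e] at key
  refine le_trans (lintegral_mono fun x => ?_) (key.trans_eq ?_)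
  · gcongr
    exact indicator_le_self _ _ _
  · rw [decay]
    congr 1
    refine lintegral_congr fun x => ?_
    by_cases hx : x ∈ G l <;> simp [hx]

lemma exists_lintegral_sum_dens_pow_le {γ : ℝ} (hγ : γ < N) (r m : ℕ) {τ : ℝ} (h0 : 0 < τ)
    (h1 : τ ≤ 1) : ∃ C : ℝ≥0∞, C ≠ ⊤ ∧ ∀ (ν : Measure (Euc N)) [SFinite ν] (L : ℤ) (n : ℕ),
      ∫⁻ x, (∑ j ∈ Finset.range n, dens γ r ν (j - L) x ^ τ) ^ (m + 2) ≤
        C * ∑ j ∈ Finset.range n, ∫⁻ x, (dens γ r ν (j - L) x ^ τ) ^ (m + 2) := by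
  set C0 := max 1 (∑' j, decay N γ r τ j)
  have hC0 : C0 ≠ ⊤ := by simp [C0, tsum_decay_ne_top hγ r h0]
  refine ⟨(m + 2) * (2 * ((m + 1) * C0 * (2 * (m + 1) * C0) ^ m)), by finiteness,
    fun ν _ L n => ?_⟩
  · have := lintegral_sum_pow_le (P := (volume : Measure (Euc N))) m (le_max_left _ _) hC0
      (le_max_right _ _) n
      (fun j x => dens γ r ν (j - L) x ^ τ)
      (fun j => (dens_cellConst γ r ν (j - L)).measurable.pow_const τ) (fun l j hlj => by
        have := carleson_condition ν γ r h0 h1 L (fun _ => univ) (fun _ _ _ _ => rfl) m l j hlj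
        simpa using this)
    exact this

lemma exists_sum_lintegral_dens_le_sup {γ s : ℝ} (hγ : γ < N) (hs : 1 < s) :
    ∃ C : ℝ≥0∞, C ≠ ⊤ ∧ ∀ (ν : Measure (Euc N)) [SFinite ν] (L : ℤ) (n : ℕ)
      (G : ℕ → Set (Euc N)), (∀ j : ℕ, CellConst (j - L) (· ∈ G j)) → ∀ M : Euc N → ℝ≥0∞,
      (∀ j < n, ∀ x ∈ G j, dens γ 0 ν (j - L) x ≤ M x) →
      ∑ j ∈ Finset.range n, ∫⁻ x, (G j).indicator (fun x => dens γ 0 ν (j - L) x ^ s) x ≤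
        C * ∫⁻ x, M x ^ s := by
  obtain ⟨m, hm⟩ := exists_nat_ge s
  set τ := s / (m + 2 : ℝ)
  have h0 : 0 < τ := by positivity
  have h1 : τ ≤ 1 := by rw [div_le_one (by positivity)]; linarith
  have hτ : τ * ((m + 2 : ℕ) : ℝ) = s := by
    push_cast; exact div_mul_cancel₀ _ (by positivity)
  set C0 := max 1 (∑' j, decay N γ 0 τ j)
  have hC0 : C0 ≠ ⊤ := by simp [C0, tsum_decay_ne_top hγ 0 h0]
  obtain ⟨C', hC', H⟩ := sum_lintegral_pow_le_sup (P := (volume : Measure (Euc N))) m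
    (le_max_left _ _) hC0 (D := decay N γ 0 τ) (le_max_right _ _)
  refine ⟨C', hC', fun ν _ L n G hG M hM => ?_⟩
  have := H n (fun j => (G j).indicator fun x => dens γ 0 ν (j - L) x ^ τ)
    (fun j => (cellConst_indicator (fun x y h => by simp [dens_cellConst γ 0 ν (j - L) h])
      (hG j)).measurable)
    (fun l j hlj => carleson_condition ν γ 0 h0 h1 L G hG m l j hlj)
    (fun x => M x ^ τ) (fun j hj x => by
      by_cases hx : x ∈ G j
      · simp only [hx, indicator_of_mem]
        exact ENNReal.rpow_le_rpow (hM j hj x hx) h0.le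
      · simp [hx])
  have e : ∀ a : ℝ≥0∞, (a ^ τ) ^ (m + 2) = a ^ s := fun a => by
    rw [← ENNReal.rpow_natCast, ← ENNReal.rpow_mul, hτ]
  simp only [e] at this
  refine le_trans (Finset.sum_le_sum fun j _ => lintegral_mono fun x => ?_) this
  by_cases hx : x ∈ G j <;> simp [hx, e]

end Carleson

/-! ### Radial potentials and their dyadic counterparts -/

section Potentials

variable {N : ℕ}

/-- The potential `∫_0^∞ (ν(B_ρ(x)) / ρ ^ γ) ^ σ dρ / ρ`. -/
def pot (γ σ : ℝ) (ν : Measure (Euc N)) (x : Euc N) : ℝ≥0∞ :=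
  ∫⁻ ρ in Ioi (0 : ℝ), (ν (ball x ρ) / ENNReal.ofReal (ρ ^ γ)) ^ σ / ENNReal.ofReal ρ

lemma setOf_pos_and_lt_top : {ρ : ℝ | 0 < ρ ∧ ENNReal.ofReal ρ < ⊤} = Ioi 0 := by
  ext ρ; simp

lemma wolff_top_eq_pot (α p : ℝ) (ν : Measure (Euc N)) :
    wolff α p ⊤ ν = pot (N - α * p) (1 / (p - 1)) ν := by
  ext x; simp only [wolff, pot, setOf_pos_and_lt_top]

lemma rieszPot_top_eq_pot (β : ℝ) (ν : Measure (Euc N)) :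
    rieszPot β ⊤ ν = pot (N - β) 1 ν := by
  ext x; simp only [rieszPot, pot, setOf_pos_and_lt_top, ENNReal.rpow_one]

lemma measurable_measure_ball (ν : Measure (Euc N)) [SFinite ν] :
    Measurable fun z : Euc N × ℝ => ν (ball z.1 z.2) := by
  have hS : MeasurableSet {w : (Euc N × ℝ) × Euc N | dist w.2 w.1.1 < w.1.2} :=
    measurableSet_lt (by fun_prop) (by fun_prop)
  exact measurable_measure_prodMk_left hS

lemma measurable_pot (γ σ : ℝ) (ν : Measure (Euc N)) [SFinite ν] : Measurable (pot γ σ ν) := by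
  refine Measurable.lintegral_prod_right' (f := fun z : Euc N × ℝ =>
    (ν (ball z.1 z.2) / ENNReal.ofReal (z.2 ^ γ)) ^ σ / ENNReal.ofReal z.2) ?_
  exact (((measurable_measure_ball ν).div (by fun_prop)).pow_const σ).div (by fun_prop)

/-- The normalized mass of the ball of radius `2 ^ (-k)`. -/
def ballDens (γ : ℝ) (ν : Measure (Euc N)) (k : ℤ) (x : Euc N) : ℝ≥0∞ :=
  ν (ball x ((2 : ℝ) ^ (-k))) * twoPow (k * γ)

lemma twoPow_intCast (k : ℤ) : twoPow k = ENNReal.ofReal ((2 : ℝ) ^ k) := by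
  rw [twoPow_eq_ofReal, Real.rpow_intCast]

lemma twoPow_intCast_mul (k : ℤ) (γ : ℝ) :
    twoPow (k * γ) = ENNReal.ofReal (((2 : ℝ) ^ k) ^ γ) := by
  rw [twoPow_eq_ofReal, Real.rpow_mul two_pos.le, Real.rpow_intCast]

lemma Ioi_zero_eq_iUnion : Ioi (0 : ℝ) = ⋃ k : ℤ, Ioc ((2 : ℝ) ^ k) (2 ^ (k + 1)) := by
  ext ρ
  simp only [mem_Ioi, mem_iUnion]
  refine ⟨fun h => exists_mem_Ioc_zpow h one_lt_two, ?_⟩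
  rintro ⟨k, hk⟩
  exact lt_trans (by positivity) hk.1

lemma pot_eq_tsum (γ σ : ℝ) (ν : Measure (Euc N)) (x : Euc N) :
    pot γ σ ν x = ∑' k : ℤ, ∫⁻ ρ in Ioc ((2 : ℝ) ^ k) (2 ^ (k + 1)),
      (ν (ball x ρ) / ENNReal.ofReal (ρ ^ γ)) ^ σ / ENNReal.ofReal ρ := by
  rw [pot, Ioi_zero_eq_iUnion, lintegral_iUnion (fun _ => measurableSet_Ioc)]
  have hm : Monotone fun k : ℤ => (2 : ℝ) ^ k := fun a b h => zpow_le_zpow_right₀ one_le_two h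
  exact hm.pairwise_disjoint_on_Ioc_succ

lemma volume_Ioc_zpow (k : ℤ) : volume (Ioc ((2 : ℝ) ^ k) (2 ^ (k + 1))) = twoPow k := by
  rw [Real.volume_Ioc, twoPow_intCast]
  congr 1
  rw [zpow_add_one₀ two_ne_zero]; ring

lemma pot_annulus_le {γ σ : ℝ} (hγ : 0 ≤ γ) (hσ : 0 ≤ σ) (ν : Measure (Euc N)) (x : Euc N)
    (k : ℤ) : ∫⁻ ρ in Ioc ((2 : ℝ) ^ k) (2 ^ (k + 1)),
      (ν (ball x ρ) / ENNReal.ofReal (ρ ^ γ)) ^ σ / ENNReal.ofReal ρ ≤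
    twoPow (γ * σ) * ballDens γ ν (-(k + 1)) x ^ σ := by
  have h2k : (0 : ℝ) < 2 ^ k := by positivity
  calc _ ≤ ∫⁻ ρ in Ioc ((2 : ℝ) ^ k) (2 ^ (k + 1)),
        (ν (ball x (2 ^ (k + 1))) / twoPow (k * γ)) ^ σ / twoPow k := by
        refine setLIntegral_mono' measurableSet_Ioc fun ρ hρ => ?_
        rw [twoPow_intCast_mul, twoPow_intCast]
        gcongr
        · exact hρ.2
        · exact hρ.1.le
        · exact hρ.1.le
    _ = (ν (ball x (2 ^ (k + 1))) / twoPow (k * γ)) ^ σ := by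
        rw [setLIntegral_const, volume_Ioc_zpow,
          ENNReal.div_mul_cancel (twoPow_ne_zero _) (twoPow_ne_top _)]
    _ = _ := by
        rw [← twoPow_rpow γ, ← ENNReal.mul_rpow_of_nonneg _ _ hσ, ballDens, neg_neg, div_eq_mul_inv,
          ← twoPow_neg]
        congr 1
        rw [mul_left_comm, ← twoPow_add]
        push_cast; ring_nf

lemma le_pot_annulus {γ σ : ℝ} (hγ : 0 ≤ γ) (hσ : 0 ≤ σ) (ν : Measure (Euc N)) (x : Euc N)
    (k : ℤ) : ballDens γ ν (-k) x ^ σ ≤ 2 * twoPow (γ * σ) *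
    ∫⁻ ρ in Ioc ((2 : ℝ) ^ k) (2 ^ (k + 1)),
      (ν (ball x ρ) / ENNReal.ofReal (ρ ^ γ)) ^ σ / ENNReal.ofReal ρ := by
  have h2k : (0 : ℝ) < 2 ^ k := by positivity
  have key : (ν (ball x (2 ^ k)) / twoPow ((k + 1 : ℤ) * γ)) ^ σ / twoPow (k + 1 : ℤ) * twoPow k ≤
      ∫⁻ ρ in Ioc ((2 : ℝ) ^ k) (2 ^ (k + 1)),
      (ν (ball x ρ) / ENNReal.ofReal (ρ ^ γ)) ^ σ / ENNReal.ofReal ρ := by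
    rw [← volume_Ioc_zpow k, ← setLIntegral_const]
    refine setLIntegral_mono' measurableSet_Ioc fun ρ hρ => ?_
    rw [twoPow_intCast_mul, twoPow_intCast]
    have := h2k.trans hρ.1
    gcongr
    · exact hρ.1.le
    · exact hρ.2
    · exact hρ.2
  refine le_trans (le_of_eq ?_) (mul_le_mul_right key _)
  have e1 : twoPow 1 = 2 := by simp [twoPow]
  have e2 : 2 * twoPow (γ * σ) * ((ν (ball x (2 ^ k)) / twoPow ((k + 1 : ℤ) * γ)) ^ σ /
      twoPow (k + 1 : ℤ) * twoPow k) = twoPow (γ * σ) *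
        (ν (ball x (2 ^ k)) / twoPow ((k + 1 : ℤ) * γ)) ^ σ *
        (twoPow 1 * twoPow (-(k + 1 : ℤ)) * twoPow k) := by
    rw [e1, twoPow_neg, div_eq_mul_inv]; ring
  rw [e2, ← twoPow_add, ← twoPow_add]
  have e3 : (1 + -((k + 1 : ℤ) : ℝ) + k) = 0 := by push_cast; ring
  rw [e3, twoPow_zero, mul_one, ← twoPow_rpow γ, ← ENNReal.mul_rpow_of_nonneg _ _ hσ, ballDens,
    neg_neg, div_eq_mul_inv, ← twoPow_neg, mul_left_comm, ← twoPow_add]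
  push_cast; ring_nf

lemma pot_le_tsum_ballDens {γ σ : ℝ} (hγ : 0 ≤ γ) (hσ : 0 ≤ σ) (ν : Measure (Euc N))
    (x : Euc N) : pot γ σ ν x ≤ twoPow (γ * σ) * ∑' k : ℤ, ballDens γ ν k x ^ σ := by
  rw [pot_eq_tsum, ← ENNReal.tsum_mul_left]
  refine (ENNReal.tsum_le_tsum fun k => pot_annulus_le hγ hσ ν x k).trans_eq ?_
  exact ((Equiv.addRight (1 : ℤ)).trans (Equiv.neg ℤ)).tsum_eq
    fun k => twoPow (γ * σ) * ballDens γ ν k x ^ σ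

lemma tsum_ballDens_le_pot {γ σ : ℝ} (hγ : 0 ≤ γ) (hσ : 0 ≤ σ) (ν : Measure (Euc N))
    (x : Euc N) : ∑' k : ℤ, ballDens γ ν k x ^ σ ≤ 2 * twoPow (γ * σ) * pot γ σ ν x := by
  rw [pot_eq_tsum, ← ENNReal.tsum_mul_left, ← (Equiv.neg ℤ).tsum_eq]
  exact ENNReal.tsum_le_tsum fun k => le_pot_annulus hγ hσ ν x k

lemma ball_subset_nbhd_one (k : ℤ) (x : Euc N) : ball x ((2 : ℝ) ^ (-k)) ⊆ nbhd 1 k x := by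
  intro y hy i
  have h2 : (0 : ℝ) < 2 ^ k := by positivity
  have h1 : |y i - x i| < (2 : ℝ) ^ (-k) :=
    lt_of_le_of_lt (by simpa [dist_eq_norm] using PiLp.norm_apply_le (y - x) i) (mem_ball.1 hy)
  rw [zpow_neg, ← one_div, lt_div_iff₀ h2] at h1
  have h3 : |y i * 2 ^ k - x i * 2 ^ k| < 1 := by
    rwa [← sub_mul, abs_mul, abs_of_pos h2]
  rw [abs_lt] at h3
  have a1 := Int.floor_le (y i * (2 : ℝ) ^ k)
  have a2 := Int.lt_floor_add_one (y i * (2 : ℝ) ^ k)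
  have a3 := Int.floor_le (x i * (2 : ℝ) ^ k)
  have a4 := Int.lt_floor_add_one (x i * (2 : ℝ) ^ k)
  have b1 : cell k y i < cell k x i + 2 := by
    have : ((cell k y i : ℤ) : ℝ) < ((cell k x i + 2 : ℤ) : ℝ) := by
      simp only [cell]; push_cast; linarith
    exact_mod_cast this
  have b2 : cell k x i < cell k y i + 2 := by
    have : ((cell k x i : ℤ) : ℝ) < ((cell k y i + 2 : ℤ) : ℝ) := by
      simp only [cell]; push_cast; linarith
    exact_mod_cast this
  rw [abs_le]
  push_cast
  omega

lemma nbhd_zero_subset_ball (k : ℤ) (x : Euc N) :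
    nbhd 0 k x ⊆ ball x ((2 : ℝ) ^ (-(k - N))) := by
  intro y hy
  have h2 : (0 : ℝ) < 2 ^ k := by positivity
  have h1 : ∀ i, ‖(y - x) i‖ ≤ (2 : ℝ) ^ (-k) := by
    intro i
    have h := congrFun (mem_nbhd_zero.1 hy) i
    simp only [cell] at h
    have h3 := Int.abs_sub_lt_one_of_floor_eq_floor h
    rw [← sub_mul, abs_mul, abs_of_pos h2] at h3
    rw [zpow_neg, ← one_div, le_div_iff₀ h2]
    simpa using h3.le
  have h3 : dist y x ≤ N * (2 : ℝ) ^ (-k) := by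
    rw [dist_eq_norm, EuclideanSpace.norm_eq]
    apply Real.sqrt_le_iff.2 ⟨by positivity, ?_⟩
    calc ∑ i, ‖(y - x) i‖ ^ 2 ≤ ∑ _i : Fin N, ((2 : ℝ) ^ (-k)) ^ 2 := by
          gcongr with i; exact h1 i
      _ = N * ((2 : ℝ) ^ (-k)) ^ 2 := by simp
      _ ≤ (N : ℝ) ^ 2 * ((2 : ℝ) ^ (-k)) ^ 2 := by
          gcongr
          exact_mod_cast Nat.le_self_pow two_ne_zero N
      _ = _ := by ring
  refine mem_ball.2 (h3.trans_lt ?_)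
  rw [neg_sub, sub_eq_add_neg, zpow_add₀ two_ne_zero, zpow_natCast]
  gcongr
  exact_mod_cast Nat.lt_two_pow_self

lemma ballDens_le_dens_one (γ : ℝ) (ν : Measure (Euc N)) (k : ℤ) (x : Euc N) :
    ballDens γ ν k x ≤ dens γ 1 ν k x := by
  unfold ballDens dens
  gcongr
  exact ball_subset_nbhd_one k x

lemma dens_zero_le_ballDens (γ : ℝ) (ν : Measure (Euc N)) (k : ℤ) (x : Euc N) :
    dens γ 0 ν k x ≤ twoPow (N * γ) * ballDens γ ν (k - N) x := by
  unfold ballDens dens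
  rw [mul_left_comm, ← twoPow_add]
  have : N * γ + (k - N : ℤ) * γ = k * γ := by push_cast; ring
  rw [this]
  gcongr
  exact nbhd_zero_subset_ball k x

lemma pot_le_tsum_dens {γ σ : ℝ} (hγ : 0 ≤ γ) (hσ : 0 ≤ σ) (ν : Measure (Euc N))
    (x : Euc N) : pot γ σ ν x ≤ twoPow (γ * σ) * ∑' k : ℤ, dens γ 1 ν k x ^ σ := by
  refine (pot_le_tsum_ballDens hγ hσ ν x).trans ?_
  gcongr with k
  exact ballDens_le_dens_one γ ν k x

/-- The constant comparing dyadic sums with potentials. -/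
def potConst (N : ℕ) (γ σ : ℝ) : ℝ≥0∞ := twoPow (N * γ) ^ σ * (2 * twoPow (γ * σ))

lemma potConst_ne_top (N : ℕ) (γ : ℝ) {σ : ℝ} (hσ : 0 ≤ σ) : potConst N γ σ ≠ ⊤ := by
  have h1 := twoPow_ne_top (γ * σ)
  have h2 := ENNReal.rpow_ne_top_of_nonneg hσ (twoPow_ne_top (N * γ))
  unfold potConst
  finiteness

lemma tsum_dens_le_pot {γ σ : ℝ} (hγ : 0 ≤ γ) (hσ : 0 ≤ σ) (ν : Measure (Euc N))
    (x : Euc N) : ∑' k : ℤ, dens γ 0 ν k x ^ σ ≤ potConst N γ σ * pot γ σ ν x := by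
  calc _ ≤ ∑' k : ℤ, (twoPow (N * γ) * ballDens γ ν (k - N) x) ^ σ := by
        gcongr with k; exact dens_zero_le_ballDens γ ν k x
    _ = twoPow (N * γ) ^ σ * ∑' k : ℤ, ballDens γ ν (k - N) x ^ σ := by
        simp_rw [ENNReal.mul_rpow_of_nonneg _ _ hσ]
        rw [ENNReal.tsum_mul_left]
    _ = twoPow (N * γ) ^ σ * ∑' k : ℤ, ballDens γ ν k x ^ σ := by
        congr 1
        exact (Equiv.subRight (N : ℤ)).tsum_eq fun k => ballDens γ ν k x ^ σ
    _ ≤ _ := by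
        rw [potConst, mul_assoc]
        gcongr
        exact tsum_ballDens_le_pot hγ hσ ν x

lemma dens_rpow_le_pot {γ σ : ℝ} (hγ : 0 ≤ γ) (hσ : 0 ≤ σ) (ν : Measure (Euc N))
    (k : ℤ) (x : Euc N) : dens γ 0 ν k x ^ σ ≤ potConst N γ σ * pot γ σ ν x :=
  (ENNReal.le_tsum k).trans (tsum_dens_le_pot hγ hσ ν x)

end Potentials

/-! ### Dyadic energies -/

section Energy

variable {N : ℕ}

/-- The truncated dyadic energy of a measure. -/
def energy (γ s : ℝ) (ν : Measure (Euc N)) (L : ℤ) (n : ℕ) : ℝ≥0∞ :=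
  ∑ j ∈ Finset.range n, ∫⁻ x, dens γ 0 ν (j - L) x ^ s

/-- The translation by the integer vector `e - 1` in units of the side length `2 ^ (-k)`. -/
def shift (k : ℤ) (e : Fin N → Fin 3) : Euc N :=
  WithLp.toLp 2 fun i => (((e i : ℕ) : ℤ) - 1 : ℤ) * (2 : ℝ) ^ (-k)

lemma cell_add_shift (k : ℤ) (e : Fin N → Fin 3) (x : Euc N) (i : Fin N) :
    cell k (x + shift k e) i = cell k x i + (((e i : ℕ) : ℤ) - 1) := by
  have h : (x + shift k e) i * (2 : ℝ) ^ k = x i * (2 : ℝ) ^ k + (((e i : ℕ) : ℤ) - 1 : ℤ) := by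
    have h1 : (x + shift k e) i = x i + (((e i : ℕ) : ℤ) - 1 : ℤ) * (2 : ℝ) ^ (-k) := rfl
    rw [h1, add_mul, mul_assoc, ← zpow_add₀ two_ne_zero, neg_add_cancel, zpow_zero, mul_one]
  simp only [cell, h, Int.floor_add_intCast]

lemma nbhd_one_subset (k : ℤ) (x : Euc N) :
    nbhd 1 k x ⊆ ⋃ e ∈ (Finset.univ : Finset (Fin N → Fin 3)), nbhd 0 k (x + shift k e) := by
  intro y hy
  simp only [Finset.mem_univ, iUnion_true, mem_iUnion]
  have hy' : ∀ i, -1 ≤ cell k y i - cell k x i ∧ cell k y i - cell k x i ≤ 1 := fun i => by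
    have := abs_le.1 (hy i); simpa using this
  refine ⟨fun i => ⟨(cell k y i - cell k x i + 1).toNat, by have := hy' i; omega⟩, ?_⟩
  rw [mem_nbhd_zero]
  ext i
  rw [cell_add_shift]
  have := hy' i
  simp only
  omega

lemma lintegral_dens_one_rpow_le (ν : Measure (Euc N)) (γ : ℝ) {s : ℝ} (hs : 1 ≤ s) (k : ℤ) :
    ∫⁻ x, dens γ 1 ν k x ^ s ≤ ((3 : ℝ≥0∞) ^ N) ^ s * ∫⁻ x, dens γ 0 ν k x ^ s := by
  have hcard : ((Finset.univ : Finset (Fin N → Fin 3)).card : ℝ≥0∞) = 3 ^ N := by simp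
  have h1 : ∀ x, dens γ 1 ν k x ^ s ≤ ((3 : ℝ≥0∞) ^ N) ^ (s - 1) *
      ∑ e : Fin N → Fin 3, dens γ 0 ν k (x + shift k e) ^ s := by
    intro x
    rw [← hcard]
    refine le_trans ?_ (ENNReal.rpow_sum_le_const_mul_sum_rpow _ _ hs)
    refine ENNReal.rpow_le_rpow ?_ (by linarith)
    simp only [dens]
    rw [← Finset.sum_mul]
    gcongr
    exact (measure_mono (nbhd_one_subset k x)).trans (measure_biUnion_finset_le _ _)
  refine (lintegral_mono h1).trans ?_
  have hm : ∀ e : Fin N → Fin 3, Measurable fun x => dens γ 0 ν k (x + shift k e) ^ s := fun e =>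
    ((dens_cellConst γ 0 ν k).measurable.comp (measurable_add_const _)).pow_const s
  rw [lintegral_const_mul _ (Finset.measurable_fun_sum _ fun e _ => hm e),
    lintegral_finsetSum _ fun e _ => hm e]
  have h2 : ∀ e : Fin N → Fin 3, ∫⁻ x, dens γ 0 ν k (x + shift k e) ^ s =
      ∫⁻ x, dens γ 0 ν k x ^ s := fun e =>
    lintegral_add_right_eq_self (fun x => dens γ 0 ν k x ^ s) _
  simp only [h2, Finset.sum_const, nsmul_eq_mul, hcard]
  rw [← mul_assoc]
  refine le_of_eq (congrArg (· * _) ?_)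
  conv_lhs => rw [← ENNReal.rpow_one ((3 : ℝ≥0∞) ^ N), ← ENNReal.rpow_mul, one_mul]
  rw [← ENNReal.rpow_add_of_nonneg _ _ (by linarith) zero_le_one, sub_add_cancel]

/-- The symmetric partial sums of a family indexed by the integers. -/
def symmSum (f : ℤ → ℝ≥0∞) (n : ℕ) : ℝ≥0∞ := ∑ j ∈ Finset.range (2 * n), f (j - n)

lemma symmSum_mono (f : ℤ → ℝ≥0∞) : Monotone (symmSum f) := by
  refine monotone_nat_of_le_succ fun n => ?_
  have h : 2 * (n + 1) = (2 * n + 1) + 1 := by ring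
  rw [symmSum, symmSum, h, Finset.sum_range_succ, Finset.sum_range_succ']
  refine le_add_right (le_add_right (Finset.sum_le_sum fun j _ => ?_))
  exact le_of_eq (by congr 1; push_cast; ring)

lemma tsum_int_le_iSup_symmSum (f : ℤ → ℝ≥0∞) : ∑' k, f k ≤ ⨆ n, symmSum f n := by
  rw [ENNReal.tsum_eq_iSup_sum]
  refine iSup_le fun s => ?_
  obtain ⟨n, hn⟩ : ∃ n : ℕ, ∀ k ∈ s, |k| < n := by
    obtain ⟨n, hn⟩ := (s.image fun k => k.natAbs).exists_nat_subset_range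
    refine ⟨n, fun k hk => ?_⟩
    have := Finset.mem_range.1 (hn (Finset.mem_image_of_mem _ hk))
    rw [Int.abs_eq_natAbs]
    exact_mod_cast this
  refine le_trans ?_ (le_iSup _ n)
  rw [symmSum, ← Finset.sum_image (s := Finset.range (2 * n)) (g := fun j : ℕ => (j : ℤ) - n)
    (by intro a _ b _ h; simp at h; exact h)]
  refine Finset.sum_le_sum_of_subset fun k hk => ?_
  have := abs_lt.1 (hn k hk)
  refine Finset.mem_image.2 ⟨(k + n).toNat, ?_, ?_⟩
  · simp; omega
  · simp; omega

lemma rpow_sum_le_sum_rpow {ι : Type*} (s : Finset ι) (f : ι → ℝ≥0∞) {t : ℝ} (h0 : 0 < t)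
    (h1 : t ≤ 1) : (∑ i ∈ s, f i) ^ t ≤ ∑ i ∈ s, f i ^ t := by
  classical
  induction s using Finset.induction_on with
  | empty => simp [h0]
  | insert a s ha ih =>
    rw [Finset.sum_insert ha, Finset.sum_insert ha]
    exact (ENNReal.rpow_add_le_add_rpow _ _ h0.le h1).trans (by gcongr)

lemma iSup_rpow_of_pos {ι : Sort*} (f : ι → ℝ≥0∞) {t : ℝ} (ht : 0 < t) :
    (⨆ i, f i) ^ t = ⨆ i, f i ^ t :=
  (ENNReal.orderIsoRpow t ht).map_iSup f

/-- Upper bound of the power integral of a potential by the dyadic energy. -/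
lemma exists_lintegral_pot_rpow_le {γ σ s : ℝ} (h0γ : 0 ≤ γ) (hγ : γ < N) (hσ : 0 < σ)
    (hs : 1 < s) : ∃ C : ℝ≥0∞, C ≠ ⊤ ∧ ∀ (ν : Measure (Euc N)) [SFinite ν] (B : ℝ≥0∞),
      (∀ L n, energy γ s ν L n ≤ B) → ∫⁻ x, pot γ σ ν x ^ (s / σ) ≤ C * B := by
  obtain ⟨m, hm⟩ := exists_nat_ge (s + s / σ)
  set τ := s / (m + 2 : ℝ)
  have hsσ : 0 < s / σ := by positivity
  have h0 : 0 < τ := by positivity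
  have h1 : τ ≤ 1 := by rw [div_le_one (by positivity)]; linarith
  have h2 : τ ≤ σ := by
    rw [div_le_iff₀ (by positivity), ← div_le_iff₀' hσ]; linarith
  have hτ : τ * ((m + 2 : ℕ) : ℝ) = s := by
    push_cast; exact div_mul_cancel₀ _ (by positivity)
  obtain ⟨C, hC, H⟩ := exists_lintegral_sum_dens_pow_le (N := N) hγ 1 m h0 h1
  refine ⟨twoPow (γ * σ) ^ (s / σ) * (C * ((3 : ℝ≥0∞) ^ N) ^ s), ?_, fun ν _ B hB => ?_⟩
  · have a1 := ENNReal.rpow_ne_top_of_nonneg hsσ.le (twoPow_ne_top (γ * σ))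
    have a2 : ((3 : ℝ≥0∞) ^ N) ^ s ≠ ⊤ :=
      ENNReal.rpow_ne_top_of_nonneg (by linarith) (by finiteness)
    finiteness
  have e : ∀ a : ℝ≥0∞, (a ^ τ) ^ (m + 2) = a ^ s := fun a => by
    rw [← ENNReal.rpow_natCast, ← ENNReal.rpow_mul, hτ]
  have step : ∀ n : ℕ, ∫⁻ x, symmSum (fun k => dens γ 1 ν k x ^ σ) n ^ (s / σ) ≤
      C * ((3 : ℝ≥0∞) ^ N) ^ s * B := by
    intro n
    calc _ ≤ ∫⁻ x, (∑ j ∈ Finset.range (2 * n), dens γ 1 ν (j - n) x ^ τ) ^ (m + 2) := by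
          refine lintegral_mono fun x => ?_
          have hst : s / σ = (τ / σ) * ((m + 2 : ℕ) : ℝ) := by rw [← hτ]; ring
          dsimp only
          rw [hst, ENNReal.rpow_mul, ENNReal.rpow_natCast]
          gcongr
          refine (rpow_sum_le_sum_rpow _ _ (by positivity) (by rwa [div_le_one hσ])).trans_eq ?_
          refine Finset.sum_congr rfl fun j _ => ?_
          rw [← ENNReal.rpow_mul, mul_div_cancel₀ _ hσ.ne']
      _ ≤ C * ∑ j ∈ Finset.range (2 * n), ∫⁻ x, (dens γ 1 ν (j - n) x ^ τ) ^ (m + 2) :=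
          H ν n (2 * n)
      _ ≤ C * ∑ j ∈ Finset.range (2 * n),
            (((3 : ℝ≥0∞) ^ N) ^ s * ∫⁻ x, dens γ 0 ν (j - n) x ^ s) := by
          gcongr with j
          simp only [e]
          exact lintegral_dens_one_rpow_le ν γ hs.le _
      _ = C * ((3 : ℝ≥0∞) ^ N) ^ s * energy γ s ν n (2 * n) := by
          rw [← Finset.mul_sum, energy]; ring
      _ ≤ _ := by gcongr; exact hB _ _
  have hmeas : ∀ n, Measurable fun x => symmSum (fun k => dens γ 1 ν k x ^ σ) n ^ (s / σ) :=
    fun n => Measurable.pow_const (Finset.measurable_fun_sum _ fun j _ =>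
      (dens_cellConst γ 1 ν _).measurable.pow_const σ) _
  calc ∫⁻ x, pot γ σ ν x ^ (s / σ)
      ≤ ∫⁻ x, twoPow (γ * σ) ^ (s / σ) *
          ⨆ n, symmSum (fun k => dens γ 1 ν k x ^ σ) n ^ (s / σ) := by
        refine lintegral_mono fun x => ?_
        dsimp only
        rw [← iSup_rpow_of_pos _ hsσ, ← ENNReal.mul_rpow_of_nonneg _ _ hsσ.le]
        gcongr
        refine (pot_le_tsum_dens h0γ hσ.le ν x).trans ?_
        gcongr
        exact tsum_int_le_iSup_symmSum _
    _ = twoPow (γ * σ) ^ (s / σ) *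
          ⨆ n, ∫⁻ x, symmSum (fun k => dens γ 1 ν k x ^ σ) n ^ (s / σ) := by
        rw [lintegral_const_mul _ (Measurable.iSup hmeas), lintegral_iSup hmeas]
        intro a b hab x
        exact ENNReal.rpow_le_rpow (symmSum_mono _ hab) hsσ.le
    _ ≤ twoPow (γ * σ) ^ (s / σ) * (C * ((3 : ℝ≥0∞) ^ N) ^ s * B) := by
        gcongr; exact iSup_le step
    _ = _ := by ring

lemma measurable_measure_ball_radius (ν : Measure (Euc N)) (y : Euc N) :
    Measurable fun ρ : ℝ => ν (ball y ρ) :=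
  Monotone.measurable fun _ _ h => measure_mono (ball_subset_ball h)

lemma measurable_measure_ball_center (ν : Measure (Euc N)) [SFinite ν] (ρ : ℝ) :
    Measurable fun y : Euc N => ν (ball y ρ) := by
  have hS : MeasurableSet {w : Euc N × Euc N | dist w.2 w.1 < ρ} :=
    measurableSet_lt (by fun_prop) (by fun_prop)
  exact measurable_measure_prodMk_left hS

lemma lintegral_withDensity_ball (ν : Measure (Euc N)) [SFinite ν]
    {g : Euc N → ℝ≥0∞} (hg : Measurable g) (ρ : ℝ) :
    ∫⁻ x, (volume.withDensity g) (ball x ρ) ∂ν = ∫⁻ y, g y * ν (ball y ρ) := by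
  have hS : MeasurableSet {w : Euc N × Euc N | dist w.2 w.1 < ρ} :=
    measurableSet_lt (by fun_prop) (by fun_prop)
  have a1 : ∀ x, (volume.withDensity g) (ball x ρ) =
      ∫⁻ y, {w : Euc N × Euc N | dist w.2 w.1 < ρ}.indicator (fun w => g w.2) (x, y) := by
    intro x
    rw [withDensity_apply _ measurableSet_ball, ← lintegral_indicator measurableSet_ball]
    exact lintegral_congr fun y => rfl
  have a2 : ∀ y, g y * ν (ball y ρ) =
      ∫⁻ x, {w : Euc N × Euc N | dist w.2 w.1 < ρ}.indicator (fun w => g w.2) (x, y) ∂ν := by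
    intro y
    rw [← lintegral_indicator_const measurableSet_ball]
    refine lintegral_congr fun x => ?_
    by_cases h : dist x y < ρ
    · have h' : dist y x < ρ := by rwa [dist_comm]
      simp [h, h']
    · have h' : ¬ dist y x < ρ := by rwa [dist_comm]
      simp [h, h']
  simp_rw [a1, a2]
  rw [lintegral_lintegral_swap]
  exact ((hg.comp measurable_snd).indicator hS).aemeasurable

lemma lintegral_mul_pot_one (γ : ℝ) (ν ρ : Measure (Euc N)) [SFinite ν] [SFinite ρ]
    {g : Euc N → ℝ≥0∞} (hg : Measurable g) :
    ∫⁻ y, g y * pot γ 1 ν y ∂ρ = ∫⁻ r in Ioi (0 : ℝ),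
      ((ENNReal.ofReal (r ^ γ))⁻¹ * (ENNReal.ofReal r)⁻¹) * ∫⁻ y, g y * ν (ball y r) ∂ρ := by
  have a3 : ∀ y, g y * pot γ 1 ν y = ∫⁻ r in Ioi (0 : ℝ),
      ((ENNReal.ofReal (r ^ γ))⁻¹ * (ENNReal.ofReal r)⁻¹) * (g y * ν (ball y r)) := by
    intro y
    have hy := measurable_measure_ball_radius ν y
    have hy' : Measurable fun r : ℝ =>
        (ν (ball y r) / ENNReal.ofReal (r ^ γ)) ^ (1 : ℝ) / ENNReal.ofReal r :=
      ((hy.div (by fun_prop)).pow_const _).div (by fun_prop)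
    rw [pot, ← lintegral_const_mul _ hy']
    refine lintegral_congr fun r => ?_
    simp only [ENNReal.rpow_one, div_eq_mul_inv]
    ring
  simp_rw [a3]
  rw [lintegral_lintegral_swap]
  · refine lintegral_congr fun r => ?_
    have hr : Measurable fun y => g y * ν (ball y r) := hg.mul (measurable_measure_ball_center ν r)
    rw [lintegral_const_mul _ hr]
  · refine Measurable.aemeasurable ?_
    change Measurable fun z : Euc N × ℝ => ((ENNReal.ofReal (z.2 ^ γ))⁻¹ *
      (ENNReal.ofReal z.2)⁻¹) * (g z.1 * ν (ball z.1 z.2))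
    exact Measurable.mul (by fun_prop) ((hg.comp measurable_fst).mul (measurable_measure_ball ν))

/-- The potential with `σ = 1` is symmetric. -/
lemma lintegral_pot_one_withDensity (γ : ℝ) (ν : Measure (Euc N)) [SFinite ν]
    {g : Euc N → ℝ≥0∞} (hg : Measurable g) :
    ∫⁻ x, pot γ 1 (volume.withDensity g) x ∂ν = ∫⁻ y, g y * pot γ 1 ν y := by
  have h := lintegral_mul_pot_one γ (volume.withDensity g) ν (g := fun _ => 1) measurable_const
  simp only [one_mul] at h
  rw [h, lintegral_mul_pot_one γ ν volume hg]
  exact lintegral_congr fun r => by rw [lintegral_withDensity_ball ν hg r]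

/-- A testing inequality for the energy of a finite measure bounds its mass by the capacity of any
set carrying it. -/
lemma exists_measure_le_of_energy_le {γ s s' : ℝ} (h0γ : 0 ≤ γ) (hγ : γ < N)
    (hs : s.HolderConjugate s') : ∃ C : ℝ≥0∞, C ≠ ⊤ ∧ ∀ (ν : Measure (Euc N)) [IsFiniteMeasure ν]
      (B : ℝ≥0∞), (∀ L n, energy γ s ν L n ≤ B * ν univ) → ∀ g : Euc N → ℝ≥0∞, Measurable g →
      (∀ᵐ x ∂ν, 1 ≤ pot γ 1 (volume.withDensity g) x) →
      ν univ ≤ (C * B) ^ (s' / s) * ∫⁻ x, g x ^ s' := by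
  obtain ⟨C, hC, H⟩ := exists_lintegral_pot_rpow_le h0γ hγ one_pos hs.lt
  refine ⟨C, hC, fun ν _ B hB g hg h1 => ?_⟩
  have hs0 := hs.pos
  have hs0' := hs.symm.pos
  rcases eq_or_ne (ν univ) 0 with h0 | h0
  · simp [h0]
  have hI : (∫⁻ x, pot γ 1 ν x ^ s) ≤ C * (B * ν univ) := by
    simpa using H ν (B * ν univ) hB
  have key : ν univ ≤ (∫⁻ x, g x ^ s') ^ (1 / s') * (C * (B * ν univ)) ^ (1 / s) := by
    calc ν univ = ∫⁻ _, 1 ∂ν := by simp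
      _ ≤ ∫⁻ x, pot γ 1 (volume.withDensity g) x ∂ν := lintegral_mono_ae h1
      _ = ∫⁻ y, g y * pot γ 1 ν y := lintegral_pot_one_withDensity γ ν hg
      _ ≤ (∫⁻ x, g x ^ s') ^ (1 / s') * (∫⁻ x, pot γ 1 ν x ^ s) ^ (1 / s) :=
          ENNReal.lintegral_mul_le_Lp_mul_Lq _ hs.symm hg.aemeasurable
            (measurable_pot γ 1 ν).aemeasurable
      _ ≤ _ := by gcongr
  have hf := measure_ne_top ν univ
  have h2 := ENNReal.rpow_le_rpow key hs0'.le
  rw [ENNReal.mul_rpow_of_nonneg _ _ hs0'.le, ← ENNReal.rpow_mul, ← ENNReal.rpow_mul,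
    one_div_mul_cancel hs0'.ne', ENNReal.rpow_one, ← mul_assoc, one_div_mul_eq_div,
    ENNReal.mul_rpow_of_nonneg _ _ (by positivity)] at h2
  have e : s' = 1 + s' / s := by
    have := hs.symm.sub_one_pos
    have h3 := hs.symm.mul_eq_add
    field_simp
    linarith
  have hne : ν univ ^ (s' / s) ≠ 0 := by simp [ENNReal.rpow_eq_zero_iff, h0, hf]
  have hnt : ν univ ^ (s' / s) ≠ ⊤ := ENNReal.rpow_ne_top_of_nonneg (by positivity) hf
  have h4 : ν univ ^ s' = ν univ * ν univ ^ (s' / s) := by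
    conv_lhs => rw [e, ENNReal.rpow_add_of_nonneg _ _ zero_le_one (by positivity),
      ENNReal.rpow_one]
  rw [h4, ← mul_assoc] at h2
  have h5 := (ENNReal.mul_le_mul_iff_left hne hnt).1 h2
  rwa [mul_comm]

end Energy

/-! ### Capacity estimates and the testing inequality -/

section Capacity

variable {N : ℕ}

lemma rieszCap_mono {β t : ℝ} {E F : Set (Euc N)} (h : E ⊆ F) :
    rieszCap N β t E ≤ rieszCap N β t F := by
  unfold rieszCap
  refine le_iInf fun g => le_iInf fun hg => le_iInf fun hF => ?_
  exact iInf_le_of_le g (iInf_le_of_le hg (iInf_le_of_le (fun x hx => hF x (h hx)) le_rfl))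

lemma pot_one_const_smul (γ : ℝ) (ν : Measure (Euc N)) {c : ℝ≥0∞} (hc : c ≠ ⊤) (x : Euc N) :
    pot γ 1 (c • ν) x = c * pot γ 1 ν x := by
  rw [pot, pot, ← lintegral_const_mul' _ _ hc]
  refine lintegral_congr fun r => ?_
  simp only [Measure.smul_apply, smul_eq_mul, ENNReal.rpow_one, div_eq_mul_inv]
  ring

lemma rieszCap_le_of_le_pot {β t : ℝ} (ht : 0 ≤ t) {E : Set (Euc N)} {g : Euc N → ℝ≥0∞}
    (hg : Measurable g) {c : ℝ≥0∞} (hc0 : c ≠ 0) (hc : c ≠ ⊤)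
    (h : ∀ x ∈ E, c ≤ pot (N - β) 1 (volume.withDensity g) x) :
    rieszCap N β t E ≤ c⁻¹ ^ t * ∫⁻ x, g x ^ t := by
  have hcg : Measurable (c⁻¹ • g) := hg.const_smul _
  have hci : c⁻¹ ≠ ⊤ := ENNReal.inv_ne_top.2 hc0
  unfold rieszCap
  refine iInf_le_of_le (c⁻¹ • g) (iInf_le_of_le hcg (iInf_le_of_le (fun x hx => ?_) ?_))
  · rw [rieszPot_top_eq_pot, withDensity_smul _ hg, pot_one_const_smul _ _ hci,
      ← ENNReal.inv_mul_cancel hc0 hc]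
    gcongr
    exact h x hx
  · rw [← lintegral_const_mul _ (hg.pow_const t)]
    refine lintegral_mono fun x => le_of_eq ?_
    simp [ENNReal.mul_rpow_of_nonneg _ _ ht]

lemma sum_cellConst_le_pot {γ : ℝ} (hγ : 0 ≤ γ) (L : ℤ) (n : ℕ) {h : ℕ → Euc N → ℝ≥0∞}
    (hh : ∀ j : ℕ, CellConst (j - L) (h j)) {g : Euc N → ℝ≥0∞}
    (hg : ∀ j < n, ∀ x, h j x ≤ g x) (x : Euc N) :
    ∑ j ∈ Finset.range n, h j x * twoPow (((j : ℤ) - L : ℤ) * (γ - N)) ≤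
      potConst N γ 1 * pot γ 1 (volume.withDensity g) x := by
  refine le_trans ?_ (tsum_dens_le_pot hγ zero_le_one _ x)
  simp only [ENNReal.rpow_one]
  refine le_trans (Finset.sum_le_sum (g := fun j : ℕ =>
    dens γ 0 (volume.withDensity g) ((j : ℤ) - L) x) fun j hj => ?_) ?_
  · simp only [dens]
    rw [withDensity_apply _ (measurableSet_nbhd _ _ _)]
    calc _ = h j x * volume (nbhd 0 ((j : ℤ) - L) x) * twoPow (((j : ℤ) - L : ℤ) * γ) := by
          rw [volume_nbhd_zero, mul_assoc, ← twoPow_add]; ring_nf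
      _ ≤ _ := by
          gcongr
          rw [← setLIntegral_nbhd_zero_of_cellConst (hh j)]
          exact lintegral_mono fun y => hg j (Finset.mem_range.1 hj) y
  · rw [← Finset.sum_image (s := Finset.range n) (g := fun j : ℕ => (j : ℤ) - L)
      (f := fun k => dens γ 0 (volume.withDensity g) k x)
      (by intro a _ b _ h; simp at h; exact h)]
    exact ENNReal.sum_le_tsum _

/-- Capacity bound from a finite family of cellwise constant functions. -/
lemma rieszCap_le_of_sum_cellConst {β t : ℝ} (hβ : β ≤ N) (ht : 0 < t) (L : ℤ) (n : ℕ)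
    {h : ℕ → Euc N → ℝ≥0∞} (hh : ∀ j : ℕ, CellConst (j - L) (h j)) {c : ℝ≥0∞} (hc0 : c ≠ 0)
    (hc : c ≠ ⊤) {E : Set (Euc N)}
    (hE : ∀ x ∈ E, c ≤ ∑ j ∈ Finset.range n, h j x * twoPow (-(((j : ℤ) - L : ℤ) * β))) :
    rieszCap N β t E ≤ (potConst N (N - β) 1 / c) ^ t *
      ∑ j ∈ Finset.range n, ∫⁻ x, h j x ^ t := by
  set g : Euc N → ℝ≥0∞ := fun x => ⨆ j ∈ Finset.range n, h j x with hgdef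
  have hm : ∀ j, Measurable (h j) := fun j => (hh j).measurable
  have hg : Measurable g :=
    Measurable.biSup _ (Finset.range n).countable_toSet fun j _ => hm j
  set P := potConst N (N - β) 1
  have hP0 : P ≠ 0 := by
    simp [P, potConst, twoPow_ne_zero]
  have hPt : P ≠ ⊤ := potConst_ne_top _ _ zero_le_one
  have key := rieszCap_le_of_le_pot (β := β) (c := c / P) ht.le hg
    (ENNReal.div_ne_zero.2 ⟨hc0, hPt⟩)
    (ENNReal.div_ne_top hc hP0) (E := E) (fun x hx => by
      refine ENNReal.div_le_of_le_mul' ((hE x hx).trans ?_)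
      refine le_trans (le_of_eq ?_) (sum_cellConst_le_pot (γ := N - β) (by linarith) L n hh
        (g := g) (fun j hj x => le_iSup₂_of_le j (Finset.mem_range.2 hj) le_rfl) x)
      refine Finset.sum_congr rfl fun j _ => ?_
      congr 2; ring)
  rw [ENNReal.inv_div (Or.inl hPt) (Or.inl hP0)] at key
  refine key.trans ?_
  gcongr
  rw [← lintegral_finsetSum _ fun j _ => (hm j).pow_const t]
  refine lintegral_mono fun x => ?_
  rw [← ENNReal.le_rpow_inv_iff ht]
  refine iSup₂_le fun j hj => ?_
  rw [ENNReal.le_rpow_inv_iff ht]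
  exact Finset.single_le_sum (f := fun j => h j x ^ t) (fun _ _ => zero_le) hj

lemma rieszCap_nbhd_le {β t : ℝ} (hβ : β ≤ N) (ht : 0 < t) (r : ℕ) (k : ℤ) (x : Euc N) :
    rieszCap N β t (nbhd r k x) ≤ potConst N (N - β) 1 ^ t * (2 * r + 1 : ℝ≥0∞) ^ N *
      twoPow (k * (β * t - N)) := by
  have hG : CellConst k (· ∈ nbhd r k x) := fun y z h => by
    rw [eq_iff_iff]
    simp only [nbhd, mem_ofPred_eq, h]
  have := rieszCap_le_of_sum_cellConst hβ ht (-k) 1 (E := nbhd r k x) (c := twoPow (-(k * β)))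
    (h := fun j => if j = 0 then (nbhd r k x).indicator fun _ => 1 else fun _ => 0)
    (fun j => by
      by_cases hj : j = 0
      · subst hj
        simpa using cellConst_indicator (f := fun _ => 1) (fun _ _ _ => rfl) hG
      · simp [hj, CellConst])
    (twoPow_ne_zero _) (twoPow_ne_top _) (fun y hy => by simp [hy])
  refine this.trans (le_of_eq ?_)
  have e : ∫⁻ y, (nbhd r k x).indicator (fun _ => (1 : ℝ≥0∞)) y ^ t = volume (nbhd r k x) := by
    rw [← lintegral_indicator_one (measurableSet_nbhd r k x)]
    refine lintegral_congr fun y => ?_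
    by_cases hy : y ∈ nbhd r k x <;> simp [hy, ht]
  simp only [Finset.range_one, Finset.sum_singleton, if_true]
  rw [e, volume_nbhd, div_eq_mul_inv, ← twoPow_neg, neg_neg, ENNReal.mul_rpow_of_nonneg _ _ ht.le,
    twoPow_rpow]
  have e2 : twoPow (k * (β * t - N)) = twoPow (k * β * t) * twoPow (-(k * N)) := by
    rw [← twoPow_add]; ring_nf
  rw [e2]; ring

/-- Capacity bound for the superlevel sets of restricted sums of the weights `wdens`. -/
lemma rieszCap_le_of_sum_wdens {β s s' : ℝ} (hβ : β ≤ N) (hs : s.HolderConjugate s')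
    (ν : Measure (Euc N)) (L : ℤ) (n : ℕ) {G : ℕ → Set (Euc N)}
    (hG : ∀ j : ℕ, CellConst (j - L) (· ∈ G j)) {c : ℝ≥0∞} (hc0 : c ≠ 0)
    (hc : c ≠ ⊤) {E : Set (Euc N)}
    (hE : ∀ x ∈ E, c ≤ ∑ j ∈ Finset.range n, (G j).indicator (wdens (N - β) s ν (j - L)) x) :
    rieszCap N β s' E ≤ (potConst N (N - β) 1 / c) ^ s' *
      ∑ j ∈ Finset.range n, ∫⁻ x, (G j).indicator (fun x => dens (N - β) 0 ν (j - L) x ^ s) x := by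
  have hs0' := hs.symm.pos
  have e : (s - 1) * s' = s := by
    have := hs.mul_eq_add
    linarith
  have := rieszCap_le_of_sum_cellConst hβ hs0' L n (E := E) (c := c)
    (h := fun j => (G j).indicator fun x => dens (N - β) 0 ν (j - L) x ^ (s - 1))
    (fun j => cellConst_indicator (fun x y h => by simp [dens_cellConst (N - β) 0 ν (j - L) h])
      (hG j)) hc0 hc (fun x hx => by
      refine (hE x hx).trans (le_of_eq ?_)
      refine Finset.sum_congr rfl fun j _ => ?_
      by_cases hj : x ∈ G j
      · simp only [hj, indicator_of_mem, wdens]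
        congr 2; ring
      · simp [hj])
  refine this.trans (le_of_eq ?_)
  congr 1
  refine Finset.sum_congr rfl fun j _ => lintegral_congr fun x => ?_
  by_cases hj : x ∈ G j
  · simp [hj, ← ENNReal.rpow_mul, e]
  · simp [hj, hs0']

lemma lintegral_le_add_tsum {Ω : Type*} [MeasurableSpace Ω] (P : Measure Ω) {V : Ω → ℝ≥0∞}
    (hV : Measurable V) (hVt : ∀ x, V x ≠ ⊤) {τ : ℝ≥0∞} (h0 : τ ≠ 0) (ht : τ ≠ ⊤) :
    ∫⁻ x, V x ∂P ≤ τ * P univ + ∑' i : ℕ, 2 * (2 ^ i * τ) * P {x | 2 ^ i * τ ≤ V x} := by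
  have hms : ∀ i : ℕ, MeasurableSet {x | 2 ^ i * τ ≤ V x} := fun i =>
    measurableSet_le measurable_const hV
  calc ∫⁻ x, V x ∂P ≤ ∫⁻ x, (τ + ∑' i : ℕ,
        {x | 2 ^ i * τ ≤ V x}.indicator (fun _ => 2 * (2 ^ i * τ)) x) ∂P := by
        refine lintegral_mono fun x => ?_
        dsimp only
        rcases le_or_gt (V x) τ with h | h
        · exact le_add_right h
        have hne : V x / τ ≠ ⊤ := ENNReal.div_ne_top (hVt x) h0
        have h1 : 1 ≤ V x / τ := by
          rw [ENNReal.le_div_iff_mul_le (Or.inl h0) (Or.inl ht), one_mul]; exact h.le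
        obtain ⟨i, hi1, hi2⟩ : ∃ i : ℕ, 2 ^ i ≤ V x / τ ∧ V x / τ < 2 ^ (i + 1) := by
          lift V x / τ to ℝ≥0 using hne with y
          exact_mod_cast exists_nat_pow_near (by exact_mod_cast h1) (one_lt_two (α := ℝ≥0))
        rw [ENNReal.le_div_iff_mul_le (Or.inl h0) (Or.inl ht)] at hi1
        rw [ENNReal.div_lt_iff (Or.inl h0) (Or.inl ht)] at hi2
        refine le_add_left (le_trans ?_ (ENNReal.le_tsum i))
        have : x ∈ {x | 2 ^ i * τ ≤ V x} := hi1
        rw [indicator_of_mem this]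
        refine hi2.le.trans (le_of_eq ?_)
        rw [pow_succ]; ring
    _ = _ := by
        rw [lintegral_add_left measurable_const, lintegral_const,
          lintegral_tsum fun i => (measurable_const.indicator (hms i)).aemeasurable]
        congr 1
        refine tsum_congr fun i => ?_
        rw [lintegral_indicator_const (hms i)]

lemma exists_mul_twoPow_le {K : ℝ≥0∞} (hK : K ≠ ⊤) {t : ℝ} (ht : 0 < t) :
    ∃ T : ℝ, K * twoPow (-(T * t)) ≤ 1 / 2 := by
  obtain ⟨m, hm⟩ := ENNReal.exists_nat_gt hK
  refine ⟨(m + 1) / t, ?_⟩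
  rw [div_mul_cancel₀ _ ht.ne', twoPow_neg, ← div_eq_mul_inv]
  refine ENNReal.div_le_of_le_mul ?_
  have h1 : twoPow (m + 1) = 2 * 2 ^ m := by
    have : ((m : ℝ) + 1) = ((m + 1 : ℕ) : ℝ) := by push_cast; rfl
    rw [twoPow, this, ENNReal.rpow_natCast, pow_succ]; ring
  rw [h1, ← mul_assoc, one_div, ENNReal.inv_mul_cancel two_ne_zero ENNReal.ofNat_ne_top, one_mul]
  refine hm.le.trans ?_
  exact_mod_cast Nat.lt_two_pow_self.le

lemma dens_ne_top {γ : ℝ} {r : ℕ} {ν : Measure (Euc N)} [IsFiniteMeasure ν] (k : ℤ) (x : Euc N) :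
    dens γ r ν k x ≠ ⊤ := ENNReal.mul_ne_top (measure_ne_top _ _) (twoPow_ne_top _)

lemma wdens_ne_top {γ s : ℝ} (hs : 1 ≤ s) {ν : Measure (Euc N)} [IsFiniteMeasure ν] (k : ℤ)
    (x : Euc N) : wdens γ s ν k x ≠ ⊤ :=
  ENNReal.mul_ne_top (ENNReal.rpow_ne_top_of_nonneg (by linarith) (dens_ne_top k x))
    (twoPow_ne_top _)

lemma energy_eq_lintegral {γ s : ℝ} (hs : 1 ≤ s) (ν : Measure (Euc N)) [SFinite ν] (L : ℤ)
    (n : ℕ) : energy γ s ν L n = ∫⁻ x, ∑ j ∈ Finset.range n, wdens γ s ν (j - L) x ∂ν := by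
  rw [lintegral_finsetSum _ fun j _ => (wdens_cellConst γ s ν _).measurable]
  refine Finset.sum_congr rfl fun j _ => ?_
  have := lintegral_mul_dens_rpow ν (γ := γ) hs (h := fun _ => 1) (k := (j : ℤ) - L)
    (fun _ _ _ => rfl)
  simpa using this

lemma energy_ne_top {γ s : ℝ} (hs : 1 ≤ s) (ν : Measure (Euc N)) [IsFiniteMeasure ν] (L : ℤ)
    (n : ℕ) : energy γ s ν L n ≠ ⊤ := by
  rw [energy_eq_lintegral hs]
  set A : ℝ≥0∞ := ∑ j ∈ Finset.range n,
    (ν univ * twoPow (((j : ℤ) - L : ℤ) * γ)) ^ (s - 1) * twoPow (((j : ℤ) - L : ℤ) * (γ - N))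
  have hA : A ≠ ⊤ := by
    refine ENNReal.sum_ne_top.2 fun j _ => ENNReal.mul_ne_top
      (ENNReal.rpow_ne_top_of_nonneg (by linarith)
      (ENNReal.mul_ne_top (measure_ne_top _ _) (twoPow_ne_top _))) (twoPow_ne_top _)
  refine ne_top_of_le_ne_top (ENNReal.mul_ne_top hA (measure_ne_top ν univ)) ?_
  rw [← lintegral_const]
  refine lintegral_mono fun x => Finset.sum_le_sum fun j _ => ?_
  unfold wdens dens
  gcongr
  exact subset_univ _

/-- The capacity condition implies the testing inequality. -/
lemma exists_energy_le_of_le_rieszCap {β s s' : ℝ} (hβ : β ≤ N) (hs : s.HolderConjugate s')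
    {C₁ : ℝ≥0∞} (hC₁ : C₁ ≠ ⊤) : ∃ C : ℝ≥0∞, C ≠ ⊤ ∧ ∀ (ν : Measure (Euc N)) [IsFiniteMeasure ν],
      (∀ E, MeasurableSet E → ν E ≤ C₁ * rieszCap N β s' E) →
      ∀ L n, energy (N - β) s ν L n ≤ C * ν univ := by
  set P := potConst N (N - β) 1
  have hs0' := hs.symm.pos
  have hs1' := hs.symm.sub_one_pos
  have hPt : P ≠ ⊤ := potConst_ne_top _ _ zero_le_one
  set S := ∑' i : ℕ, twoPow (-(i * (s' - 1)))
  have hS : S ≠ ⊤ := tsum_twoPow_ne_top hs1'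
  set K := 2 * C₁ * P ^ s' * S
  have hK : K ≠ ⊤ := by
    have := ENNReal.rpow_ne_top_of_nonneg hs0'.le hPt
    finiteness
  obtain ⟨T, hT⟩ := exists_mul_twoPow_le hK hs1'
  refine ⟨2 * twoPow T, ENNReal.mul_ne_top (by simp) (twoPow_ne_top _), fun ν _ hν L n => ?_⟩
  set X := energy (N - β) s ν L n with hX
  have hXt : X ≠ ⊤ := energy_ne_top hs.lt.le ν L n
  set V : Euc N → ℝ≥0∞ := fun x => ∑ j ∈ Finset.range n, wdens (N - β) s ν (j - L) x
  have hXV : X = ∫⁻ x, V x ∂ν := energy_eq_lintegral hs.lt.le ν L n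
  have hVm : Measurable V :=
    Finset.measurable_fun_sum _ fun j _ => (wdens_cellConst (N - β) s ν _).measurable
  have hVt : ∀ x, V x ≠ ⊤ := fun x => ENNReal.sum_ne_top.2 fun j _ => wdens_ne_top hs.lt.le _ _
  have hlevel : ∀ i : ℕ, 2 * (2 ^ i * twoPow T) * ν {x | 2 ^ i * twoPow T ≤ V x} ≤
      2 * C₁ * P ^ s' * twoPow (-(T * (s' - 1))) * X * twoPow (-(i * (s' - 1))) := by
    intro i
    have e2 : (2 : ℝ≥0∞) ^ i * twoPow T = twoPow (i + T) := by
      rw [twoPow_add]; congr 1; rw [twoPow, ENNReal.rpow_natCast]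
    rw [e2]
    have h1 := rieszCap_le_of_sum_wdens hβ hs ν L n (G := fun _ => univ) (fun _ _ _ _ => rfl)
      (twoPow_ne_zero (i + T)) (twoPow_ne_top (i + T)) (E := {x | twoPow (i + T) ≤ V x})
      (fun x hx => by simpa [V] using hx)
    simp only [indicator_univ] at h1
    have h2 := (hν _ (measurableSet_le measurable_const hVm)).trans (mul_le_mul_right h1 C₁)
    refine (mul_le_mul_right h2 _).trans (le_of_eq ?_)
    change 2 * twoPow (i + T) * (C₁ * ((P / twoPow (i + T)) ^ s' * X)) = _
    rw [div_eq_mul_inv, ← twoPow_neg, ENNReal.mul_rpow_of_nonneg _ _ hs0'.le, twoPow_rpow]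
    calc _ = 2 * C₁ * P ^ s' * X * (twoPow (i + T) * twoPow (-(i + T) * s')) := by ring
      _ = 2 * C₁ * P ^ s' * X * (twoPow (-(T * (s' - 1))) * twoPow (-(i * (s' - 1)))) := by
          rw [← twoPow_add, ← twoPow_add]; ring_nf
      _ = _ := by ring
  have hmain : X ≤ twoPow T * ν univ + X / 2 := by
    calc X = ∫⁻ x, V x ∂ν := hXV
      _ ≤ _ := lintegral_le_add_tsum ν hVm hVt (twoPow_ne_zero T) (twoPow_ne_top T)
      _ ≤ twoPow T * ν univ + ∑' i : ℕ,
          2 * C₁ * P ^ s' * twoPow (-(T * (s' - 1))) * X * twoPow (-(i * (s' - 1))) := by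
          exact add_le_add_right (ENNReal.tsum_le_tsum hlevel) _
      _ = twoPow T * ν univ + K * twoPow (-(T * (s' - 1))) * X := by
          rw [ENNReal.tsum_mul_left]; simp only [K, S]; ring
      _ ≤ twoPow T * ν univ + 1 / 2 * X := by gcongr
      _ = _ := by rw [one_div, mul_comm _ X, ← div_eq_mul_inv]
  have := ennreal_le_two_mul_of_le_half_add hXt hmain
  rwa [← mul_assoc] at this

end Capacity

/-! ### Equivalence of the capacity inequalities with the testing inequality -/

section Testing

variable {N : ℕ}

lemma measure_le_mul_rieszCap {β t : ℝ} {C : ℝ≥0∞} {ω : Measure (Euc N)}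
    [IsLocallyFiniteMeasure ω] (h : ∀ K, IsCompact K → ω K ≤ C * rieszCap N β t K)
    {E : Set (Euc N)} (hE : MeasurableSet E) : ω E ≤ C * rieszCap N β t E := by
  rw [hE.measure_eq_iSup_isCompact]
  refine iSup₂_le fun K hKE => iSup_le fun hK => (h K hK).trans ?_
  exact mul_le_mul_right (rieszCap_mono hKE) C

lemma exists_lintegral_pot_le_of_le_rieszCap {β s s' σ : ℝ} (hβ0 : 0 < β) (hβ : β ≤ N)
    (hs : s.HolderConjugate s') (hσ : 0 < σ) {C₁ : ℝ≥0∞} (hC₁ : C₁ ≠ ⊤)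
    (μ : Measure (Euc N)) [IsLocallyFiniteMeasure μ]
    (hμ : ∀ K, IsCompact K → μ K ≤ C₁ * rieszCap N β s' K) :
    ∃ C : ℝ≥0∞, C ≠ ⊤ ∧ ∀ x t,
      ∫⁻ y, pot (N - β) σ (μ.restrict (ball x t)) y ^ (s / σ) ≤ C * μ (ball x t) := by
  obtain ⟨C, hC, H⟩ := exists_energy_le_of_le_rieszCap hβ hs hC₁
  obtain ⟨C', hC', H'⟩ := exists_lintegral_pot_rpow_le (γ := N - β) (by linarith) (by linarith)
    hσ hs.lt
  refine ⟨C' * C, ENNReal.mul_ne_top hC' hC, fun x t => ?_⟩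
  have : IsFiniteMeasure (μ.restrict (ball x t)) :=
    isFiniteMeasure_restrict.2 measure_ball_lt_top.ne
  have h := H (μ.restrict (ball x t)) fun E hE =>
    (Measure.restrict_apply_le _ E).trans (measure_le_mul_rieszCap hμ hE)
  have := H' (μ.restrict (ball x t)) _ h
  rwa [Measure.restrict_apply_univ, ← mul_assoc] at this

lemma closedBall_subset_nbhd_one (k : ℤ) (x : Euc N) :
    closedBall x (2 ^ (-(k + 1))) ⊆ nbhd 1 k x := by
  refine (closedBall_subset_ball ?_).trans (ball_subset_nbhd_one k x)
  exact zpow_lt_zpow_right₀ one_lt_two (by lia)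

lemma rieszCap_closedBall_ne_top {β t : ℝ} (hβ : β ≤ N) (ht : 0 < t) (k : ℤ) (x : Euc N) :
    rieszCap N β t (closedBall x (2 ^ (-(k + 1)))) ≠ ⊤ := by
  refine ne_top_of_le_ne_top ?_
    ((rieszCap_mono (closedBall_subset_nbhd_one k x)).trans (rieszCap_nbhd_le hβ ht 1 k x))
  have h1 := ENNReal.rpow_ne_top_of_nonneg ht.le (potConst_ne_top N (N - β) zero_le_one)
  have h2 := twoPow_ne_top (k * (β * t - N))
  finiteness

lemma isLocallyFiniteMeasure_of_le_rieszCap {β t : ℝ} (hβ : β ≤ N) (ht : 0 < t) {C : ℝ≥0∞}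
    (hC : C ≠ ⊤) {ω : Measure (Euc N)} (h : ∀ K, IsCompact K → ω K ≤ C * rieszCap N β t K) :
    IsLocallyFiniteMeasure ω := by
  refine ⟨fun x => ⟨closedBall x (2 ^ (-((0 : ℤ) + 1))), closedBall_mem_nhds x (by positivity), ?_⟩⟩
  refine (h _ (isCompact_closedBall _ _)).trans_lt ?_
  exact ENNReal.mul_lt_top hC.lt_top (rieszCap_closedBall_ne_top hβ ht 0 x).lt_top

lemma exists_wdens_le {β s s' σ : ℝ} (hβ : β ≤ N) (hs : s.HolderConjugate s') (hσ : 0 < σ)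
    {C₂ : ℝ≥0∞} (hC₂ : C₂ ≠ ⊤) (μ : Measure (Euc N)) [IsLocallyFiniteMeasure μ]
    (hμ : ∀ K, IsCompact K → ∫⁻ y in K, pot (N - β) σ μ y ^ (s / σ) ≤ C₂ * rieszCap N β s' K) :
    ∃ D : ℝ≥0∞, D ≠ ⊤ ∧ ∀ k x, wdens (N - β) s μ k x ≤ D := by
  have hs0 := hs.pos
  have hs0' := hs.symm.pos
  have hsσ : 0 < s / σ := by positivity
  set P := potConst N (N - β) σ ^ (s / σ)
  have hP : P ≠ ⊤ := ENNReal.rpow_ne_top_of_nonneg hsσ.le (potConst_ne_top _ _ hσ.le)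
  set R := potConst N (N - β) 1 ^ s' * (2 * (1 : ℕ) + 1) ^ N
  have hR : R ≠ ⊤ := by
    have := ENNReal.rpow_ne_top_of_nonneg hs0'.le (potConst_ne_top N (N - β) zero_le_one)
    finiteness
  set A := P * C₂ * R * twoPow (-(N + 1) * (β * s' - N))
  have hA : A ≠ ⊤ := by
    have := twoPow_ne_top (-(N + 1) * (β * s' - N))
    finiteness
  refine ⟨A ^ (1 / s'), ENNReal.rpow_ne_top_of_nonneg (by positivity) hA, fun k x => ?_⟩
  have h1 : dens (N - β) 0 μ k x ^ s * twoPow (-(k * N)) ≤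
      A * twoPow (k * (β * s' - N)) := by
    calc dens (N - β) 0 μ k x ^ s * twoPow (-(k * N))
        = ∫⁻ y in nbhd 0 k x, dens (N - β) 0 μ k y ^ s := by
          rw [setLIntegral_nbhd_zero_of_cellConst
            (fun x y h => by simp [dens_cellConst (N - β) 0 μ k h]), volume_nbhd_zero]
      _ ≤ ∫⁻ y in nbhd 0 k x, P * pot (N - β) σ μ y ^ (s / σ) := by
          refine lintegral_mono fun y => ?_
          have := ENNReal.rpow_le_rpow (dens_rpow_le_pot (by linarith) hσ.le μ k y :
            dens (N - β) 0 μ k y ^ σ ≤ _) hsσ.le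
          rwa [← ENNReal.rpow_mul, mul_div_cancel₀ _ hσ.ne',
            ENNReal.mul_rpow_of_nonneg _ _ hsσ.le] at this
      _ = P * ∫⁻ y in nbhd 0 k x, pot (N - β) σ μ y ^ (s / σ) :=
          lintegral_const_mul' _ _ hP
      _ ≤ P * ∫⁻ y in closedBall x (2 ^ (-((k - N - 1) + 1))), pot (N - β) σ μ y ^ (s / σ) := by
          refine mul_le_mul_right (lintegral_mono_set ?_) _
          refine (nbhd_zero_subset_ball k x).trans ?_
          rw [sub_add_cancel]
          exact ball_subset_closedBall
      _ ≤ P * (C₂ * (R * twoPow (((k - N - 1 : ℤ) : ℝ) * (β * s' - N)))) := by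
          refine mul_le_mul_right ((hμ _ (isCompact_closedBall _ _)).trans
            (mul_le_mul_right ?_ _)) _
          exact (rieszCap_mono (closedBall_subset_nbhd_one _ x)).trans
            (rieszCap_nbhd_le hβ hs0' 1 _ x)
      _ = _ := by
          have : ((k - N - 1 : ℤ) : ℝ) * (β * s' - N) =
            -(N + 1) * (β * s' - N) + k * (β * s' - N) := by push_cast; ring
          rw [this, twoPow_add]; ring
  have h2 : dens (N - β) 0 μ k x ^ s ≤ A * twoPow (k * β * s') := by
    have := mul_le_mul_left h1 (twoPow (k * N))
    rw [mul_assoc, mul_assoc, ← twoPow_add, ← twoPow_add] at this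
    convert this using 2
    · simp [twoPow_zero]
    · ring_nf
  have h3 := ENNReal.rpow_le_rpow h2 (show 0 ≤ 1 / s' by positivity)
  have e : s * (1 / s') = s - 1 := by
    have := hs.mul_eq_add
    field_simp; linarith
  rw [← ENNReal.rpow_mul, e, ENNReal.mul_rpow_of_nonneg _ _ (by positivity), twoPow_rpow,
    mul_assoc, mul_one_div_cancel hs0'.ne', mul_one] at h3
  unfold wdens
  refine (mul_le_mul_left h3 _).trans (le_of_eq ?_)
  rw [mul_assoc, ← twoPow_add]
  ring_nf
  simp [twoPow_zero]

lemma sum_indicator_le_one {w : ℕ → ℝ≥0∞} (n : ℕ) :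
    ∑ j ∈ Finset.range n, (if ∑ l ∈ Finset.range (j + 1), w l ≤ 1 then w j else 0) ≤
      min (∑ l ∈ Finset.range n, w l) 1 := by
  induction n with
  | zero => simp
  | succ n ih =>
    rw [Finset.sum_range_succ]
    have hn := Finset.sum_range_succ w n
    split_ifs with h
    · rw [min_eq_left h, hn]
      exact add_le_add_left (ih.trans (min_le_left _ _)) _
    · rw [add_zero]
      refine ih.trans (min_le_min_right _ ?_)
      rw [hn]; exact le_self_add

lemma sum_indicator_le_one_add {w : ℕ → ℝ≥0∞} {D : ℝ≥0∞} (hD : ∀ j, w j ≤ D) (n : ℕ) :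
    ∑ j ∈ Finset.range n, (if ∑ l ∈ Finset.range j, w l ≤ 1 then w j else 0) ≤
      min (∑ l ∈ Finset.range n, w l) (1 + D) := by
  induction n with
  | zero => simp
  | succ n ih =>
    rw [Finset.sum_range_succ]
    have hn := Finset.sum_range_succ w n
    split_ifs with h
    · rw [hn, min_eq_left (add_le_add h (hD n))]
      exact add_le_add_left (ih.trans (min_le_left _ _)) _
    · rw [add_zero]
      refine ih.trans (min_le_min_right _ ?_)
      rw [hn]; exact le_self_add

lemma min_one_le_sum_indicator {w : ℕ → ℝ≥0∞} (n : ℕ) :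
    min (∑ l ∈ Finset.range n, w l) 1 ≤
      ∑ j ∈ Finset.range n, (if ∑ l ∈ Finset.range j, w l ≤ 1 then w j else 0) := by
  induction n with
  | zero => simp
  | succ n ih =>
    rw [Finset.sum_range_succ (fun j => if ∑ l ∈ Finset.range j, w l ≤ 1 then w j else 0)]
    have hn := Finset.sum_range_succ w n
    split_ifs with h
    · rw [min_eq_left h] at ih
      rw [hn]
      exact (min_le_left _ _).trans (add_le_add_left ih _)
    · rw [min_eq_right (le_of_not_ge h)] at ih
      rw [add_zero]
      exact (min_le_right _ _).trans ih

end Testing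

section CapacityOfTesting

variable {N : ℕ}

lemma le_mul_rieszCap {β t : ℝ} {a c : ℝ≥0∞} (hc0 : c ≠ 0) (hc : c ≠ ⊤) {E : Set (Euc N)}
    (h : ∀ g : Euc N → ℝ≥0∞, Measurable g →
      (∀ x ∈ E, 1 ≤ pot (N - β) 1 (volume.withDensity g) x) → a ≤ c * ∫⁻ x, g x ^ t) :
    a ≤ c * rieszCap N β t E := by
  rw [← ENNReal.div_le_iff' hc0 hc]
  refine le_iInf fun g => le_iInf fun hg => le_iInf fun h1 => ?_
  rw [ENNReal.div_le_iff' hc0 hc]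
  rw [rieszPot_top_eq_pot] at h1
  exact h g hg h1

/-- The capacity inequality for the power of the potential implies the capacity inequality for the
measure. -/
lemma exists_le_rieszCap_of_lintegral_pot_le {β s s' σ : ℝ} (hβ0 : 0 < β) (hβ : β ≤ N)
    (hs : s.HolderConjugate s') (hσ : 0 < σ) {C₂ : ℝ≥0∞} (hC₂ : C₂ ≠ ⊤) (μ : Measure (Euc N))
    [IsLocallyFiniteMeasure μ]
    (hμ : ∀ K, IsCompact K → ∫⁻ y in K, pot (N - β) σ μ y ^ (s / σ) ≤ C₂ * rieszCap N β s' K) :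
    ∃ C : ℝ≥0∞, C ≠ ⊤ ∧ ∀ K, IsCompact K → μ K ≤ C * rieszCap N β s' K := by
  have hs0 := hs.pos
  have hs0' := hs.symm.pos
  have hsσ : 0 < s / σ := by positivity
  have hs1 := hs.lt
  set γ : ℝ := N - β with hγ
  obtain ⟨D, hD, hDw⟩ := exists_wdens_le hβ hs hσ hC₂ μ hμ
  obtain ⟨C, hC, H⟩ := exists_sum_lintegral_dens_le_sup (N := N) (γ := γ) (s := s)
    (by linarith) hs1
  obtain ⟨C', hC', H'⟩ := exists_measure_le_of_energy_le (N := N) (γ := γ) (by linarith)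
    (by linarith) hs
  set ω : Measure (Euc N) := volume.withDensity fun y => pot γ σ μ y ^ (s / σ) with hω
  have hωK : ∀ K, IsCompact K → ω K ≤ C₂ * rieszCap N β s' K := fun K hK => by
    rw [hω, withDensity_apply _ hK.measurableSet]; exact hμ K hK
  have : IsLocallyFiniteMeasure ω := isLocallyFiniteMeasure_of_le_rieszCap hβ hs0' hC₂ hωK
  set P := potConst N γ σ ^ (s / σ)
  have hP : P ≠ ⊤ := ENNReal.rpow_ne_top_of_nonneg hsσ.le (potConst_ne_top _ _ hσ.le)
  set Q := potConst N γ 1 ^ s'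
  have hQ : Q ≠ ⊤ := ENNReal.rpow_ne_top_of_nonneg hs0'.le (potConst_ne_top _ _ zero_le_one)
  set B := 1 + C * P * C₂ * Q * (1 + D)
  have hB : B ≠ ⊤ := by finiteness
  have hCB : (C' * B) ^ (s' / s) ≠ ⊤ :=
    ENNReal.rpow_ne_top_of_nonneg (by positivity) (by finiteness)
  refine ⟨(C' * B) ^ (s' / s) + 1, by finiteness, fun K hK => ?_⟩
  have : IsFiniteMeasure (μ.restrict K) := isFiniteMeasure_restrict.2 hK.measure_lt_top.ne
  set ν := μ.restrict K with hν
  have hνμ : ν ≤ μ := Measure.restrict_le_self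
  have key : ∀ L n, energy γ s ν L n ≤ B * ν univ := by
    intro L n
    set w : ℕ → Euc N → ℝ≥0∞ := fun j => wdens γ s ν (j - L)
    have hw : ∀ j : ℕ, CellConst (j - L) (w j) := fun j => wdens_cellConst γ s ν _
    have hwD : ∀ j x, w j x ≤ D := fun j x => by
      refine le_trans ?_ (hDw (j - L) x)
      simp only [w, wdens]
      exact mul_le_mul_left (ENNReal.rpow_le_rpow (dens_mono_measure hνμ _ _) (by linarith)) _
    set T : ℕ → Euc N → ℝ≥0∞ := fun j x => ∑ l ∈ Finset.range j, w l x
    have hTc : ∀ j i : ℕ, j ≤ i + 1 → CellConst (i - L) (T j) := fun j i hji =>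
      cellConst_sum fun l hl => (hw l).mono (by have := Finset.mem_range.1 hl; lia)
    have hTm : ∀ j, Measurable (T j) := fun j => (hTc j j (by lia)).measurable
    have hTmono : ∀ {i j} x, i ≤ j → T i x ≤ T j x := fun x h =>
      Finset.sum_le_sum_of_subset (Finset.range_subset_range.2 h)
    set G : ℕ → Set (Euc N) := fun j => {x | ¬ T (j + 1) x ≤ 1}
    set F : ℕ → Set (Euc N) := fun j => {x | T j x ≤ 1}
    have hGc : ∀ j : ℕ, CellConst (j - L) (· ∈ G j) := fun j x y h => by
      simp only [G, mem_ofPred_eq, hTc (j + 1) j le_rfl h]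
    have hFc : ∀ j : ℕ, CellConst (j - L) (· ∈ F j) := fun j x y h => by
      simp only [F, mem_ofPred_eq, hTc j j (by lia) h]
    set E : Set (Euc N) := {x | ¬ T n x ≤ 1}
    have hE : MeasurableSet E := (measurableSet_le (hTm n) measurable_const).compl
    have hind : ∀ {S : ℕ → Set (Euc N)}, (∀ j : ℕ, CellConst (j - L) (· ∈ S j)) →
        ∑ j ∈ Finset.range n, ∫⁻ x, (S j).indicator (fun x => dens γ 0 ν (j - L) x ^ s) x =
          ∫⁻ x, ∑ j ∈ Finset.range n, (S j).indicator (w j) x ∂ν := by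
      intro S hS
      rw [lintegral_finsetSum _ fun j _ => (cellConst_indicator (hw j) (hS j)).measurable]
      refine Finset.sum_congr rfl fun j _ => ?_
      have := lintegral_mul_dens_rpow ν (γ := γ) hs1.le (h := (S j).indicator 1)
        (k := (j : ℤ) - L) (cellConst_indicator (fun _ _ _ => rfl) (hS j))
      convert this using 3 with x x
      · by_cases hx : x ∈ S j <;> simp [hx]
      · by_cases hx : x ∈ S j <;> simp [hx, w]
    have hcap : rieszCap N β s' E ≤ Q * ((1 + D) * ν univ) := by
      have := rieszCap_le_of_sum_wdens hβ hs ν L n (G := F) hFc one_ne_zero ENNReal.one_ne_top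
        (E := E) (fun x hx => by
          have h1 := min_one_le_sum_indicator (w := fun j => w j x) n
          rw [min_eq_right (le_of_not_ge hx)] at h1
          refine h1.trans (le_of_eq (Finset.sum_congr rfl fun j _ => ?_))
          rw [indicator_apply]; rfl)
      refine this.trans ?_
      rw [div_one]
      refine mul_le_mul_right ?_ _
      rw [hind hFc, ← lintegral_const]
      refine lintegral_mono fun x => ?_
      refine le_trans (le_of_eq ?_)
        ((sum_indicator_le_one_add (w := fun j => w j x) (hwD · x) n).trans (min_le_right _ _))
      refine Finset.sum_congr rfl fun j _ => ?_
      rw [indicator_apply]; rfl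
    have hG : ∫⁻ x, ∑ j ∈ Finset.range n, (G j).indicator (w j) x ∂ν ≤
        C * (P * (C₂ * (Q * ((1 + D) * ν univ)))) := by
      rw [← hind hGc]
      refine (H ν L n G hGc (E.indicator fun x => (potConst N γ σ * pot γ σ μ x) ^ (1 / σ))
        fun j hj x hx => ?_).trans (mul_le_mul_right ?_ _)
      · have hxE : x ∈ E := fun h => hx ((hTmono x hj).trans h)
        rw [indicator_of_mem hxE]
        have := ENNReal.rpow_le_rpow ((ENNReal.rpow_le_rpow (dens_mono_measure hνμ _ _)
          hσ.le).trans (dens_rpow_le_pot (by linarith) hσ.le μ (j - L) x) :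
            dens γ 0 ν (j - L) x ^ σ ≤ _) (show 0 ≤ 1 / σ by positivity)
        rwa [← ENNReal.rpow_mul, mul_one_div_cancel hσ.ne', ENNReal.rpow_one] at this
      · calc ∫⁻ x, E.indicator (fun x => (potConst N γ σ * pot γ σ μ x) ^ (1 / σ)) x ^ s
            = ∫⁻ x, E.indicator (fun x => P * pot γ σ μ x ^ (s / σ)) x := by
              refine lintegral_congr fun x => ?_
              by_cases hx : x ∈ E
              · simp only [hx, indicator_of_mem, P]
                rw [← ENNReal.rpow_mul, ← ENNReal.mul_rpow_of_nonneg _ _ hsσ.le]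
                congr 1; ring
              · simp [hx, hs0]
          _ = P * ω E := by
              rw [lintegral_indicator hE, lintegral_const_mul' _ _ hP, hω, withDensity_apply _ hE]
          _ ≤ _ := mul_le_mul_right ((measure_le_mul_rieszCap hωK hE).trans
              (mul_le_mul_right hcap _)) _
    have hsmall : ∫⁻ x, ∑ j ∈ Finset.range n, (G j)ᶜ.indicator (w j) x ∂ν ≤ ν univ := by
      rw [← one_mul (ν univ), ← lintegral_const]
      refine lintegral_mono fun x => ?_
      refine le_trans (le_of_eq ?_)
        ((sum_indicator_le_one (w := fun j => w j x) n).trans (min_le_right _ _))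
      refine Finset.sum_congr rfl fun j _ => ?_
      rw [indicator_apply]
      refine if_congr ?_ rfl rfl
      simp only [G, mem_compl_iff, mem_ofPred_eq, not_not, T]
    rw [energy_eq_lintegral hs1.le]
    calc ∫⁻ x, ∑ j ∈ Finset.range n, w j x ∂ν
        = ∫⁻ x, (∑ j ∈ Finset.range n, (G j)ᶜ.indicator (w j) x +
            ∑ j ∈ Finset.range n, (G j).indicator (w j) x) ∂ν := by
          refine lintegral_congr fun x => ?_
          rw [← Finset.sum_add_distrib]
          refine Finset.sum_congr rfl fun j _ => ?_
          exact (congrFun (indicator_compl_add_self (G j) (w j)) x).symm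
      _ = _ := lintegral_add_right _ (Finset.measurable_fun_sum _ fun j _ =>
          (cellConst_indicator (hw j) (hGc j)).measurable)
      _ ≤ ν univ + C * (P * (C₂ * (Q * ((1 + D) * ν univ)))) := add_le_add hsmall hG
      _ = B * ν univ := by simp only [B]; ring
  rw [← Measure.restrict_apply_univ K]
  refine le_mul_rieszCap (by simp) (by finiteness) fun g hg h1 => ?_
  refine (H' ν B key g hg ((ae_restrict_iff' hK.measurableSet).2 (ae_of_all _ h1))).trans ?_
  exact mul_le_mul_left le_self_add _

end CapacityOfTesting

/-! ### Dyadic maximal function and the pointwise inequality -/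

section Maximal

variable {N : ℕ}

lemma lintegral_rpow_le_of_weak {Ω : Type*} [MeasurableSpace Ω] (P : Measure Ω) {M : Ω → ℝ≥0∞}
    (hM : Measurable M) (hM1 : ∀ x, M x ≤ 1) {A : ℝ≥0∞}
    (hw : ∀ t, t ≠ 0 → t ≠ ⊤ → t * P {x | t < M x} ≤ A) {s : ℝ} (hs : 0 < s) :
    ∫⁻ x, M x ^ s ∂P ≤ 2 * (∑' i : ℕ, twoPow (-(i * (s - 1)))) * A := by
  have hms : ∀ t : ℝ, MeasurableSet {x | twoPow t < M x} := fun t =>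
    measurableSet_lt measurable_const hM
  calc ∫⁻ x, M x ^ s ∂P ≤ ∫⁻ x, (∑' i : ℕ,
        {x | twoPow (-(i + 1)) < M x}.indicator (fun _ => twoPow (-(i * s))) x) ∂P := by
        refine lintegral_mono fun x => ?_
        dsimp only
        rcases eq_or_ne (M x) 0 with h | h
        · simp [h, hs]
        have h1 : 1 ≤ (M x)⁻¹ := ENNReal.one_le_inv.2 (hM1 x)
        obtain ⟨i, hi1, hi2⟩ : ∃ i : ℕ, 2 ^ i ≤ (M x)⁻¹ ∧ (M x)⁻¹ < 2 ^ (i + 1) := by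
          lift (M x)⁻¹ to ℝ≥0 using ENNReal.inv_ne_top.2 h with y
          exact_mod_cast exists_nat_pow_near (by exact_mod_cast h1) (one_lt_two (α := ℝ≥0))
        have e : ∀ j : ℕ, (2 : ℝ≥0∞) ^ j = twoPow j := fun j => by
          rw [twoPow, ENNReal.rpow_natCast]
        rw [e, ENNReal.le_inv_iff_le_inv, ← twoPow_neg] at hi1
        rw [e, ENNReal.inv_lt_iff_inv_lt, ← twoPow_neg] at hi2
        have hx : x ∈ {x | twoPow (-(i + 1)) < M x} := by
          simpa using hi2
        refine le_trans ?_ (ENNReal.le_tsum i)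
        rw [indicator_of_mem hx]
        refine (ENNReal.rpow_le_rpow hi1 hs.le).trans (le_of_eq ?_)
        rw [twoPow_rpow, neg_mul]
    _ = ∑' i : ℕ, twoPow (-(i * s)) * P {x | twoPow (-(i + 1)) < M x} := by
        rw [lintegral_tsum fun i => (measurable_const.indicator (hms _)).aemeasurable]
        refine tsum_congr fun i => ?_
        rw [lintegral_indicator_const (hms _)]
    _ ≤ ∑' i : ℕ, twoPow (-(i * (s - 1))) * (2 * A) := by
        refine ENNReal.tsum_le_tsum fun i => ?_
        have e : twoPow (-(i * s)) = twoPow (-(i * (s - 1))) * (2 * twoPow (-(i + 1))) := by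
          have : (2 : ℝ≥0∞) = twoPow 1 := by simp [twoPow]
          nth_rewrite 1 [this]
          rw [← twoPow_add, ← twoPow_add]; ring_nf
        rw [e, mul_assoc, mul_assoc]
        exact mul_le_mul_right (mul_le_mul_right
          (hw _ (twoPow_ne_zero _) (twoPow_ne_top _)) _) _
    _ = _ := by rw [ENNReal.tsum_mul_right]; ring

/-- The dyadic weak type inequality. -/
lemma mul_measure_exists_lt_div_le (ω ν : Measure (Euc N)) [SFinite ω] [SFinite ν] (L : ℤ) (n : ℕ)
    (t : ℝ≥0∞) :
    t * ω {x | ∃ j < n, t < ν (nbhd 0 (j - L) x) / ω (nbhd 0 (j - L) x)} ≤ ν univ := by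
  set ρ : ℕ → Euc N → ℝ≥0∞ := fun j x => ν (nbhd 0 (j - L) x) / ω (nbhd 0 (j - L) x)
  have hρ : ∀ j : ℕ, CellConst (j - L) (ρ j) := fun j x y h => by
    simp only [ρ, nbhd_cellConst 0 _ h]
  set A : ℕ → Set (Euc N) := fun j => {x | (j < n ∧ t < ρ j x) ∧ ∀ i < j, ¬ (i < n ∧ t < ρ i x)}
  have hA : ∀ j : ℕ, CellConst (j - L) (· ∈ A j) := fun j x y h => by
    simp only [A, mem_ofPred_eq, hρ j h]
    congr 1
    refine propext (forall₂_congr fun i hi => ?_)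
    rw [((hρ i).mono (by lia) : CellConst (j - L) (ρ i)) h]
  have hAm : ∀ j, MeasurableSet (A j) := fun j => by
    have := (cellConst_indicator (f := fun _ => 1) (fun _ _ _ => rfl) (hA j)).measurable
    have h2 := this (measurableSet_singleton 1)
    convert h2 using 1
    ext x
    by_cases hx : x ∈ A j <;> simp [hx]
  have hdisj : Pairwise (Function.onFun Disjoint A) := by
    refine (pairwise_disjoint_on A).2 fun i j hij => Set.disjoint_left.2 fun x hi hj => ?_
    exact hj.2 i hij hi.1
  have hlocal : ∀ j, t * ω (A j) ≤ ν (A j) := fun j => by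
    have hc : CellConst (j - L) fun x => (A j).indicator 1 x * (ω (nbhd 0 (j - L) x))⁻¹ :=
      fun x y h => by
        have := (cellConst_indicator (f := fun _ => 1) (fun _ _ _ => rfl) (hA j)) h
        simp only [nbhd_cellConst 0 _ h]
        congr 1
    calc t * ω (A j) = ∫⁻ x, (A j).indicator (fun _ => t) x ∂ω := by
          rw [lintegral_indicator_const (hAm j)]
      _ ≤ ∫⁻ x, (A j).indicator 1 x * (ω (nbhd 0 (j - L) x))⁻¹ * ν (nbhd 0 (j - L) x) ∂ω := by
          refine lintegral_mono fun x => ?_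
          by_cases hx : x ∈ A j
          · have := hx.1.2.le
            simp only [ρ, div_eq_mul_inv] at this
            simp only [hx, indicator_of_mem, Pi.one_apply, one_mul]
            rwa [mul_comm]
          · simp [hx]
      _ = ∫⁻ y, (A j).indicator 1 y * (ω (nbhd 0 (j - L) y))⁻¹ * ω (nbhd 0 (j - L) y) ∂ν := by
          have := lintegral_setLIntegral_nbhd_swap ν ω (f := fun _ => 1) measurable_const
            hc.measurable 0 (j - L)
          simp only [lintegral_const, MeasurableSet.univ, Measure.restrict_apply, univ_inter,
            one_mul] at this
          rw [this]
          refine lintegral_congr fun y => ?_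
          rw [setLIntegral_nbhd_zero_of_cellConst hc]
      _ ≤ ∫⁻ y, (A j).indicator 1 y ∂ν := by
          refine lintegral_mono fun y => ?_
          dsimp only
          rw [mul_assoc]
          exact mul_le_of_le_one_right' (ENNReal.inv_mul_le_one _)
      _ = ν (A j) := lintegral_indicator_one (hAm j)
  have hU : {x | ∃ j < n, t < ρ j x} ⊆ ⋃ j, A j := by
    rintro x ⟨j, hj⟩
    classical
    have hex : ∃ j, j < n ∧ t < ρ j x := ⟨j, hj⟩
    exact mem_iUnion.2 ⟨Nat.find hex, Nat.find_spec hex, fun i hi => Nat.find_min hex hi⟩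
  calc t * ω {x | ∃ j < n, t < ρ j x} ≤ t * ∑' j, ω (A j) :=
        mul_le_mul_right ((measure_mono hU).trans (measure_iUnion_le A)) t
    _ = ∑' j, t * ω (A j) := ENNReal.tsum_mul_left.symm
    _ ≤ ∑' j, ν (A j) := ENNReal.tsum_le_tsum hlocal
    _ = ν (⋃ j, A j) := (measure_iUnion hdisj hAm).symm
    _ ≤ ν univ := measure_mono (subset_univ _)

lemma exists_lintegral_sup_div_rpow_le {s : ℝ} (hs : 1 < s) : ∃ C : ℝ≥0∞, C ≠ ⊤ ∧
    ∀ (ω ν : Measure (Euc N)) [SFinite ω] [SFinite ν], ν ≤ ω → ∀ (L : ℤ) (n : ℕ),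
      ∃ M : Euc N → ℝ≥0∞, Measurable M ∧
        (∀ j < n, ∀ x, ν (nbhd 0 (j - L) x) / ω (nbhd 0 (j - L) x) ≤ M x) ∧
        ∫⁻ x, M x ^ s ∂ω ≤ C * ν univ := by
  have hS := tsum_twoPow_ne_top (sub_pos.2 hs)
  refine ⟨2 * ∑' i : ℕ, twoPow (-(i * (s - 1))), by finiteness, fun ω ν _ _ hνω L n => ?_⟩
  set ρ : ℕ → Euc N → ℝ≥0∞ := fun j x => ν (nbhd 0 (j - L) x) / ω (nbhd 0 (j - L) x)
  have hρ : ∀ j : ℕ, CellConst (j - L) (ρ j) := fun j x y h => by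
    simp only [ρ, nbhd_cellConst 0 _ h]
  have hm : Measurable fun x => ⨆ (j : ℕ) (_ : j < n), ρ j x :=
    Measurable.iSup fun j => Measurable.iSup fun _ => (hρ j).measurable
  refine ⟨fun x => ⨆ (j : ℕ) (_ : j < n), ρ j x, hm,
    fun j hj x => le_iSup₂_of_le j hj le_rfl, ?_⟩
  refine lintegral_rpow_le_of_weak ω hm (fun x => iSup₂_le fun j _ => ?_) (fun t _ _ => ?_)
    (by linarith)
  · exact ENNReal.div_le_of_le_mul (by rw [one_mul]; exact hνω _)
  · refine le_trans (mul_le_mul_right (measure_mono fun x hx => ?_) t)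
      (mul_measure_exists_lt_div_le ω ν L n t)
    simpa [lt_iSup_iff] using hx

lemma measure_ne_top_of_pot_ne_top {γ σ : ℝ} (hγ : 0 ≤ γ) (hσ : 0 < σ) {ω : Measure (Euc N)}
    {x : Euc N} (hx : pot γ σ ω x ≠ ⊤) {E : Set (Euc N)} (hE : IsBounded E) : ω E ≠ ⊤ := by
  obtain ⟨r, hr⟩ := hE.subset_ball x
  obtain ⟨m, hm⟩ := pow_unbounded_of_one_lt r (one_lt_two (α := ℝ))
  have h1 : E ⊆ ball x ((2 : ℝ) ^ (-(-(m : ℤ)))) :=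
    hr.trans (ball_subset_ball (by rw [neg_neg, zpow_natCast]; exact hm.le))
  refine ne_top_of_le_ne_top ?_ (measure_mono h1)
  have h2 : ballDens γ ω (-(m : ℤ)) x ^ σ ≠ ⊤ := by
    refine ne_top_of_le_ne_top ?_ ((ENNReal.le_tsum (f := fun k => ballDens γ ω k x ^ σ)
      (-(m : ℤ))).trans (tsum_ballDens_le_pot hγ hσ.le ω x))
    have := twoPow_ne_top (γ * σ)
    finiteness
  intro h
  apply h2
  rw [ballDens, h, ENNReal.top_mul (twoPow_ne_zero _), ENNReal.top_rpow_of_pos hσ]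

/-- The pointwise inequality implies the capacity inequality for the power of the potential. -/
lemma exists_lintegral_pot_le_rieszCap {β s s' σ : ℝ} (hβ0 : 0 < β) (hβ : β ≤ N)
    (hs : s.HolderConjugate s') (hσ : 0 < σ) {C₄ : ℝ≥0∞} (hC₄ : C₄ ≠ ⊤) (μ : Measure (Euc N))
    [IsLocallyFiniteMeasure μ]
    (hμ : ∀ᵐ x, pot (N - β) σ (volume.withDensity fun y => pot (N - β) σ μ y ^ (s / σ)) x ≤
      C₄ * pot (N - β) σ μ x ∧ pot (N - β) σ μ x < ⊤) :
    ∃ C : ℝ≥0∞, C ≠ ⊤ ∧ ∀ K, IsCompact K →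
      ∫⁻ y in K, pot (N - β) σ μ y ^ (s / σ) ≤ C * rieszCap N β s' K := by
  have hs0 := hs.pos
  have hs0' := hs.symm.pos
  have hsσ : 0 < s / σ := by positivity
  set γ : ℝ := N - β with hγ
  have hγ0 : 0 ≤ γ := by linarith
  set f : Euc N → ℝ≥0∞ := fun y => pot γ σ μ y ^ (s / σ) with hf
  have hfm : Measurable f := (measurable_pot γ σ μ).pow_const _
  set ω := volume.withDensity f with hω
  obtain ⟨C, hC, H⟩ := exists_sum_lintegral_dens_le_sup (N := N) (γ := γ) (s := s)
    (by linarith) hs.lt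
  obtain ⟨C', hC', H'⟩ := exists_measure_le_of_energy_le (N := N) (γ := γ) (by linarith)
    (by linarith) hs
  obtain ⟨A, hA, hM⟩ := exists_lintegral_sup_div_rpow_le (N := N) hs.lt
  obtain ⟨x₀, hx₀⟩ := hμ.exists
  have hωb : ∀ E, IsBounded E → ω E ≠ ⊤ := fun E hE =>
    measure_ne_top_of_pot_ne_top hγ0 hσ
      (ne_top_of_le_ne_top (ENNReal.mul_ne_top hC₄ hx₀.2.ne) hx₀.1) hE
  have hωQ : ∀ k x, ω (nbhd 0 k x) ≠ ⊤ := fun k x =>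
    hωb _ (isBounded_ball.subset (nbhd_zero_subset_ball k x))
  set P := (potConst N γ σ * C₄) ^ (s / σ)
  have hP : P ≠ ⊤ := ENNReal.rpow_ne_top_of_nonneg hsσ.le
    (ENNReal.mul_ne_top (potConst_ne_top _ _ hσ.le) hC₄)
  set B := C * P * A
  have hB : B ≠ ⊤ := by finiteness
  have hCB : (C' * B) ^ (s' / s) ≠ ⊤ :=
    ENNReal.rpow_ne_top_of_nonneg (by positivity) (by finiteness)
  refine ⟨(C' * B) ^ (s' / s) + 1, by finiteness, fun K hK => ?_⟩
  have : IsFiniteMeasure (ω.restrict K) := isFiniteMeasure_restrict.2 (hωb K hK.isBounded)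
  set ν := ω.restrict K with hν
  have key : ∀ L n, energy γ s ν L n ≤ B * ν univ := by
    intro L n
    obtain ⟨M, hMm, hMle, hMint⟩ := hM ω ν Measure.restrict_le_self L n
    have h1 := H ν L n (fun _ => univ) (fun _ _ _ _ => rfl)
      (fun x => M x * (potConst N γ σ * pot γ σ ω x) ^ (1 / σ)) fun j hj x _ => by
        have h2 := ENNReal.rpow_le_rpow (dens_rpow_le_pot hγ0 hσ.le ω (j - L) x)
          (show 0 ≤ 1 / σ by positivity)
        rw [← ENNReal.rpow_mul, mul_one_div_cancel hσ.ne', ENNReal.rpow_one] at h2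
        refine le_trans ?_ (mul_le_mul' (hMle j hj x) h2)
        unfold dens
        rw [← mul_assoc]
        refine mul_le_mul_left ?_ _
        rcases eq_or_ne (ω (nbhd 0 (j - L) x)) 0 with h0 | h0
        · exact (Measure.restrict_apply_le _ _).trans (by simp [h0])
        · rw [ENNReal.div_mul_cancel h0 (hωQ _ _)]
    simp only [indicator_univ] at h1
    refine le_trans h1 ?_
    calc C * ∫⁻ x, (M x * (potConst N γ σ * pot γ σ ω x) ^ (1 / σ)) ^ s
        ≤ C * ∫⁻ x, P * (f x * M x ^ s) := by
          refine mul_le_mul_right (lintegral_mono_ae ?_) _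
          filter_upwards [hμ] with x hx
          have h2 : (potConst N γ σ * pot γ σ ω x) ^ (s / σ) ≤ P * f x := by
            rw [hf, ← ENNReal.mul_rpow_of_nonneg _ _ hsσ.le, mul_assoc]
            exact ENNReal.rpow_le_rpow (mul_le_mul_right hx.1 _) hsσ.le
          rw [ENNReal.mul_rpow_of_nonneg _ _ hs0.le, ← ENNReal.rpow_mul, one_div_mul_eq_div,
            mul_comm, ← mul_assoc]
          exact mul_le_mul_left h2 _
      _ = C * (P * ∫⁻ x, M x ^ s ∂ω) := by
          rw [lintegral_const_mul' _ _ hP, hω,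
            lintegral_withDensity_eq_lintegral_mul _ hfm (hMm.pow_const s)]
          rfl
      _ ≤ C * (P * (A * ν univ)) := mul_le_mul_right (mul_le_mul_right hMint _) _
      _ = B * ν univ := by simp only [B]; ring
  rw [← withDensity_apply _ hK.measurableSet, ← hω, ← Measure.restrict_apply_univ K]
  refine le_mul_rieszCap (by simp) (by finiteness) fun g hg h1 => ?_
  refine (H' ν B key g hg ((ae_restrict_iff' hK.measurableSet).2 (ae_of_all _ h1))).trans ?_
  exact mul_le_mul_left le_self_add _

end Maximal

/-! ### From the testing inequality to the pointwise inequality -/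

section Pointwise

variable {N : ℕ}

lemma add_rpow_le_twoPow_mul (u v : ℝ≥0∞) {t : ℝ} (ht : 0 ≤ t) :
    (u + v) ^ t ≤ twoPow t * (u ^ t + v ^ t) := by
  have h1 : u + v ≤ 2 * max u v := by
    rw [two_mul]; exact add_le_add (le_max_left _ _) (le_max_right _ _)
  refine (ENNReal.rpow_le_rpow h1 ht).trans ?_
  rw [ENNReal.mul_rpow_of_nonneg _ _ ht]
  refine mul_le_mul_right ?_ _
  rcases le_total u v with h | h
  · rw [max_eq_right h]; exact le_add_self
  · rw [max_eq_left h]; exact le_self_add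

lemma tsum_int_lt (k : ℤ) (F : ℤ → ℝ≥0∞) :
    ∑' i : ℤ, (if i < k then F i else 0) = ∑' j : ℕ, F (k - 1 - j) := by
  have hinj : Function.Injective fun j : ℕ => k - 1 - (j : ℤ) := fun i j h => by
    simpa using h
  rw [← hinj.tsum_eq]
  · refine tsum_congr fun j => ?_
    rw [if_pos (by lia)]
  · intro i hi
    have : i < k := by
      by_contra h
      simp [h] at hi
    exact ⟨(k - 1 - i).toNat, by dsimp only; lia⟩

lemma rpow_tsum_twoPow_mul_le {s : ℝ} (hs : 0 < s) (δ : ℝ) (c : ℕ → ℝ≥0∞) :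
    (∑' j : ℕ, twoPow (-(j * δ)) * c j) ^ s ≤
      (∑' j : ℕ, twoPow (-(j * (δ / 2)))) ^ s *
        ∑' j : ℕ, twoPow (-(j * (δ / 2 * s))) * c j ^ s := by
  set U := ∑' j : ℕ, twoPow (-(j * (δ / 2 * s))) * c j ^ s
  have h1 : ∀ j : ℕ, twoPow (-(j * (δ / 2))) * c j ≤ U ^ (1 / s) := fun j => by
    have h2 : twoPow (-(j * (δ / 2 * s))) * c j ^ s ≤ U :=
      ENNReal.le_tsum (f := fun j : ℕ => twoPow (-(j * (δ / 2 * s))) * c j ^ s) j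
    have h3 := ENNReal.rpow_le_rpow h2 (show 0 ≤ 1 / s by positivity)
    rw [ENNReal.mul_rpow_of_nonneg _ _ (by positivity), ← ENNReal.rpow_mul,
      mul_one_div_cancel hs.ne', ENNReal.rpow_one, twoPow_rpow] at h3
    convert h3 using 3
    field_simp
  calc (∑' j : ℕ, twoPow (-(j * δ)) * c j) ^ s
      ≤ (∑' j : ℕ, twoPow (-(j * (δ / 2))) * U ^ (1 / s)) ^ s := by
        refine ENNReal.rpow_le_rpow (ENNReal.tsum_le_tsum fun j => ?_) hs.le
        have e : twoPow (-(j * δ)) = twoPow (-(j * (δ / 2))) * twoPow (-(j * (δ / 2))) := by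
          rw [← twoPow_add]; ring_nf
        rw [e, mul_assoc]
        exact mul_le_mul_right (h1 j) _
    _ = _ := by
        rw [ENNReal.tsum_mul_right, ENNReal.mul_rpow_of_nonneg _ _ hs.le, ← ENNReal.rpow_mul,
          one_div_mul_cancel hs.ne', ENNReal.rpow_one]

section Sequences

variable {a : ℤ → ℝ≥0∞} {A : ℝ≥0∞} {ε s : ℝ}

lemma tsum_ne_top_of_rpow_le (hε : 0 < ε) (hs : 1 < s) (hA : A ≠ ⊤)
    (ha : ∀ i : ℤ, a i ^ (s - 1) ≤ A * twoPow (i * ε)) (k : ℤ) :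
    ∑' j : ℕ, a (k - j) ≠ ⊤ := by
  have hs1 : 0 < s - 1 := by linarith
  set δ := ε / (s - 1)
  have hδ : 0 < δ := by positivity
  have hS := tsum_twoPow_ne_top hδ
  have hA' := ENNReal.rpow_ne_top_of_nonneg (show 0 ≤ 1 / (s - 1) by positivity) hA
  have ht := twoPow_ne_top (k * δ)
  refine ne_top_of_le_ne_top (b := A ^ (1 / (s - 1)) * twoPow (k * δ) *
    ∑' j : ℕ, twoPow (-(j * δ))) (by finiteness) ?_
  rw [← ENNReal.tsum_mul_left]
  refine ENNReal.tsum_le_tsum fun j => ?_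
  have h := ENNReal.rpow_le_rpow (ha (k - j)) (show 0 ≤ 1 / (s - 1) by positivity)
  rw [← ENNReal.rpow_mul, mul_one_div_cancel hs1.ne', ENNReal.rpow_one,
    ENNReal.mul_rpow_of_nonneg _ _ (by positivity), twoPow_rpow] at h
  refine h.trans (le_of_eq ?_)
  rw [mul_assoc (A ^ _) (twoPow (k * δ)), ← twoPow_add]
  congr 2
  simp only [δ]; push_cast; ring

lemma tsum_twoPow_mul_rpow_tsum_le (hs : 1 < s)
    (ha : ∀ i : ℤ, a i ^ (s - 1) ≤ A * twoPow (i * ε)) :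
    ∑' k : ℤ, twoPow (-(k * ε)) * (∑' j : ℕ, a (k - j)) ^ s ≤
      A * (∑' j : ℕ, twoPow (-(j * (ε / s / 2)))) ^ s *
        (∑' j : ℕ, twoPow (-(j * (ε / s / 2 * s)))) * ∑' i : ℤ, a i := by
  have hs0 : 0 < s := by linarith
  have ha' : ∀ i : ℤ, a i ≤ A ^ (1 / s) * (twoPow (i * (ε / s)) * a i ^ (1 / s)) := fun i => by
    have h := ENNReal.rpow_le_rpow (ha i) (show 0 ≤ 1 / s by positivity)
    rw [← ENNReal.rpow_mul, ENNReal.mul_rpow_of_nonneg _ _ (by positivity), twoPow_rpow] at h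
    calc a i = a i ^ ((s - 1) * (1 / s)) * a i ^ (1 / s) := by
          rw [← ENNReal.rpow_add_of_nonneg]
          · have : (s - 1) * (1 / s) + 1 / s = 1 := by field_simp; ring
            rw [this, ENNReal.rpow_one]
          · have : 0 < s - 1 := by linarith
            positivity
          · positivity
      _ ≤ _ := mul_le_mul_left h _
      _ = _ := by rw [mul_assoc]; congr 3; ring
  set S := (∑' j : ℕ, twoPow (-(j * (ε / s / 2)))) ^ s
  have hk : ∀ k : ℤ, twoPow (-(k * ε)) * (∑' j : ℕ, a (k - j)) ^ s ≤
      A * S * ∑' j : ℕ, twoPow (-(j * (ε / s / 2 * s))) * a (k - j) := fun k => by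
    have e : twoPow (-(k * ε)) = twoPow (-(k * (ε / s))) ^ s := by
      rw [twoPow_rpow]; congr 1; field_simp
    rw [e, ← ENNReal.mul_rpow_of_nonneg _ _ hs0.le, ← ENNReal.tsum_mul_left]
    have h1 : ∑' j : ℕ, twoPow (-(k * (ε / s))) * a (k - j) ≤
        A ^ (1 / s) * ∑' j : ℕ, twoPow (-(j * (ε / s))) * a (k - j) ^ (1 / s) := by
      rw [← ENNReal.tsum_mul_left]
      refine ENNReal.tsum_le_tsum fun j => ?_
      refine (mul_le_mul_right (ha' (k - j)) _).trans (le_of_eq ?_)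
      have : twoPow (-(j * (ε / s))) =
          twoPow (-(k * (ε / s))) * twoPow (((k - j : ℤ) : ℝ) * (ε / s)) := by
        rw [← twoPow_add]; push_cast; ring_nf
      rw [this]; ring
    refine (ENNReal.rpow_le_rpow h1 hs0.le).trans ?_
    rw [ENNReal.mul_rpow_of_nonneg _ _ hs0.le, ← ENNReal.rpow_mul, one_div_mul_cancel hs0.ne',
      ENNReal.rpow_one, mul_assoc]
    refine mul_le_mul_right ((rpow_tsum_twoPow_mul_le hs0 _ _).trans (le_of_eq ?_)) _
    simp only [← ENNReal.rpow_mul, one_div_mul_cancel hs0.ne', ENNReal.rpow_one, S]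
  refine (ENNReal.tsum_le_tsum hk).trans (le_of_eq ?_)
  rw [ENNReal.tsum_mul_left, ENNReal.tsum_comm, mul_assoc (A * S), ← ENNReal.tsum_mul_right]
  congr 1
  refine tsum_congr fun j => ?_
  rw [ENNReal.tsum_mul_left, ← (Equiv.subRight (j : ℤ)).tsum_eq a]
  rfl

end Sequences

lemma volume_ball_zpow_le (k : ℤ) (x : Euc N) :
    volume (ball x ((2 : ℝ) ^ (-k))) ≤ (3 : ℝ≥0∞) ^ N * twoPow (-(k * N)) := by
  refine (measure_mono (ball_subset_nbhd_one k x)).trans (le_of_eq ?_)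
  rw [volume_nbhd]; norm_num

lemma le_volume_ball_zpow (k : ℤ) (x : Euc N) :
    twoPow (-(N * N)) * twoPow (-(k * N)) ≤ volume (ball x ((2 : ℝ) ^ (-k))) := by
  have := measure_mono (μ := volume) (nbhd_zero_subset_ball (k + N) x)
  rw [volume_nbhd_zero, add_sub_cancel_right] at this
  refine le_trans (le_of_eq ?_) this
  rw [← twoPow_add]; push_cast; ring_nf

section Testing

variable {γ σ s : ℝ} {C₃ : ℝ≥0∞} {μ : Measure (Euc N)}

lemma ballDens_ne_top [IsLocallyFiniteMeasure μ] (k : ℤ) (x : Euc N) :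
    ballDens γ μ k x ≠ ⊤ :=
  ENNReal.mul_ne_top measure_ball_lt_top.ne (twoPow_ne_top _)

lemma exists_ballDens_rpow_le [IsLocallyFiniteMeasure μ] (hγ : 0 ≤ γ) (hσ : 0 < σ) (hs : 1 < s)
    (hC₃ : C₃ ≠ ⊤)
    (hμ : ∀ x t, 0 < t →
      ∫⁻ y, pot γ σ (μ.restrict (ball x t)) y ^ (s / σ) ≤ C₃ * μ (ball x t)) :
    ∃ A : ℝ≥0∞, A ≠ ⊤ ∧ ∀ k x, ballDens γ μ k x ^ (s - 1) ≤ A * twoPow (k * (N - γ)) := by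
  have hs0 : 0 < s := by linarith
  have hsσ : 0 < s / σ := by positivity
  set P := (2 * twoPow (γ * σ)) ^ (s / σ)
  have hP : P ≠ ⊤ := by
    have := twoPow_ne_top (γ * σ)
    exact ENNReal.rpow_ne_top_of_nonneg hsσ.le (by finiteness)
  refine ⟨P * C₃ * twoPow (γ * s) * twoPow (N * N), ?_, fun k x => ?_⟩
  · have h1 := twoPow_ne_top (γ * s)
    have h2 := twoPow_ne_top (N * N)
    finiteness
  set B := ball x ((2 : ℝ) ^ (-k))
  set b := ballDens γ μ k x with hb
  have hbm : μ B = b * twoPow (-(k * γ)) := by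
    rw [hb, ballDens, mul_assoc, twoPow_mul_twoPow_neg, mul_one]
  have hpt : ∀ y ∈ B, (b * twoPow (-γ)) ^ s ≤ P * pot γ σ (μ.restrict B) y ^ (s / σ) := by
    intro y hy
    have hsub : B ⊆ ball y ((2 : ℝ) ^ (-(k - 1))) := by
      intro z hz
      have e : (2 : ℝ) ^ (-(k - 1)) = 2 ^ (-k) + 2 ^ (-k) := by
        rw [← two_mul, ← zpow_one_add₀ two_ne_zero]; congr 1; ring
      rw [mem_ball, e]
      have hy' := mem_ball'.1 hy
      have hz' := mem_ball.1 hz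
      exact (dist_triangle z x y).trans_lt (add_lt_add hz' hy')
    have h1 : b * twoPow (-γ) ≤ ballDens γ (μ.restrict B) (k - 1) y := by
      have e : b * twoPow (-γ) = μ B * twoPow (((k - 1 : ℤ) : ℝ) * γ) := by
        rw [hbm, mul_assoc, ← twoPow_add]; push_cast; ring_nf
      rw [e, ballDens, Measure.restrict_apply measurableSet_ball, inter_eq_right.2 hsub]
    have h2 := (ENNReal.rpow_le_rpow h1 hσ.le).trans ((ENNReal.le_tsum
      (f := fun k => ballDens γ (μ.restrict B) k y ^ σ) (k - 1)).trans
        (tsum_ballDens_le_pot hγ hσ.le (μ.restrict B) y))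
    have h3 := ENNReal.rpow_le_rpow h2 hsσ.le
    rwa [← ENNReal.rpow_mul, mul_div_cancel₀ _ hσ.ne',
      ENNReal.mul_rpow_of_nonneg _ _ hsσ.le] at h3
  have hInt : (b * twoPow (-γ)) ^ s * (twoPow (-(N * N)) * twoPow (-(k * N))) ≤
      P * (C₃ * μ B) := by
    calc (b * twoPow (-γ)) ^ s * (twoPow (-(N * N)) * twoPow (-(k * N)))
        ≤ (b * twoPow (-γ)) ^ s * volume B := mul_le_mul_right (le_volume_ball_zpow k x) _
      _ = ∫⁻ _ in B, (b * twoPow (-γ)) ^ s := by rw [setLIntegral_const]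
      _ ≤ ∫⁻ y in B, P * pot γ σ (μ.restrict B) y ^ (s / σ) :=
          setLIntegral_mono' measurableSet_ball hpt
      _ ≤ ∫⁻ y, P * pot γ σ (μ.restrict B) y ^ (s / σ) := setLIntegral_le_lintegral _ _
      _ = P * ∫⁻ y, pot γ σ (μ.restrict B) y ^ (s / σ) := lintegral_const_mul' _ _ hP
      _ ≤ _ := mul_le_mul_right (hμ x _ (by positivity)) _
  rcases eq_or_ne b 0 with h0 | h0
  · rw [h0, ENNReal.zero_rpow_of_pos (by linarith)]; exact zero_le
  have hbt : b ≠ ⊤ := ballDens_ne_top k x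
  rw [← ENNReal.mul_le_mul_iff_left h0 hbt]
  have e1 : b ^ (s - 1) * b = (b * twoPow (-γ)) ^ s *
      (twoPow (-(N * N)) * twoPow (-(k * N))) *
      (twoPow (γ * s) * twoPow (N * N) * twoPow (k * N)) := by
    have e2 : b ^ (s - 1) * b = b ^ s := by
      nth_rewrite 2 [← ENNReal.rpow_one b]
      rw [← ENNReal.rpow_add _ _ h0 hbt, sub_add_cancel]
    rw [e2, ENNReal.mul_rpow_of_nonneg _ _ hs0.le, twoPow_rpow]
    calc b ^ s = b ^ s * (twoPow (-γ * s + (-(N * N) + -(k * N)) + (γ * s + N * N + k * N))) := by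
          ring_nf; simp [twoPow_zero]
      _ = _ := by simp only [twoPow_add]; ring
  rw [e1]
  refine (mul_le_mul_left hInt _).trans (le_of_eq ?_)
  rw [hbm]
  have e3 : twoPow (k * (N - γ)) = twoPow (k * N) * twoPow (-(k * γ)) := by
    rw [← twoPow_add]; ring_nf
  rw [e3]; ring

lemma pot_le_pot_restrict_add_tsum (hγ : 0 ≤ γ) (hσ : 0 < σ) (k : ℤ) {x y : Euc N}
    (hy : y ∈ ball x ((2 : ℝ) ^ (-k))) :
    pot γ σ μ y ≤ 2 * twoPow (γ * σ) * twoPow (γ * σ) *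
      (pot γ σ (μ.restrict (ball x ((2 : ℝ) ^ (-(k - 1))))) y +
        ∑' j : ℕ, ballDens γ μ (k - j) x ^ σ) := by
  set ν := μ.restrict (ball x ((2 : ℝ) ^ (-(k - 1))))
  set a : ℤ → ℝ≥0∞ := fun i => ballDens γ μ i x ^ σ
  have hz : ∀ i : ℤ, (2 : ℝ) ^ (-(i - 1)) = 2 ^ (-i) + 2 ^ (-i) := fun i => by
    rw [← two_mul, ← zpow_one_add₀ two_ne_zero]; congr 1; ring
  have hmono : ∀ {i j : ℤ}, i ≤ j → (2 : ℝ) ^ (-j) ≤ 2 ^ (-i) := fun h =>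
    zpow_le_zpow_right₀ one_le_two (by lia)
  have hterm : ∀ i : ℤ, ballDens γ μ i y ^ σ ≤ ballDens γ ν i y ^ σ +
      (if i < k then twoPow (γ * σ) * a (i - 1) else 0) := by
    intro i
    split_ifs with h
    · refine le_add_left ?_
      have hsub : ball y ((2 : ℝ) ^ (-i)) ⊆ ball x (2 ^ (-(i - 1))) :=
        ball_subset_ball' (by
          rw [hz]; exact add_le_add_right ((mem_ball.1 hy).le.trans (hmono h.le)) _)
      have : ballDens γ μ i y ≤ twoPow γ * ballDens γ μ (i - 1) x := by
        have e : twoPow (i * γ) = twoPow γ * twoPow (((i - 1 : ℤ) : ℝ) * γ) := by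
          rw [← twoPow_add]; push_cast; ring_nf
        rw [ballDens, ballDens, e, mul_left_comm]
        exact mul_le_mul_right (mul_le_mul_left (measure_mono hsub) _) _
      refine (ENNReal.rpow_le_rpow this hσ.le).trans (le_of_eq ?_)
      rw [ENNReal.mul_rpow_of_nonneg _ _ hσ.le, twoPow_rpow]
    · rw [add_zero]
      have hsub : ball y ((2 : ℝ) ^ (-i)) ⊆ ball x (2 ^ (-(k - 1))) :=
        ball_subset_ball' (by
          rw [hz]; exact add_le_add (hmono (not_lt.1 h)) (mem_ball.1 hy).le)
      simp only [ballDens, ν]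
      rw [Measure.restrict_apply measurableSet_ball, inter_eq_left.2 hsub]
  have hinj : Function.Injective fun j : ℕ => j + 2 := add_left_injective 2
  have hT : ∑' i : ℤ, (if i < k then twoPow (γ * σ) * a (i - 1) else 0) ≤
      twoPow (γ * σ) * ∑' j : ℕ, a (k - j) := by
    rw [tsum_int_lt, ENNReal.tsum_mul_left]
    refine mul_le_mul_right (le_trans (le_of_eq ?_)
      (ENNReal.tsum_comp_le_tsum_of_injective hinj fun j : ℕ => a (k - j))) _
    refine tsum_congr fun j => ?_
    congr 1; push_cast; ring
  calc pot γ σ μ y ≤ twoPow (γ * σ) * ∑' i : ℤ, ballDens γ μ i y ^ σ :=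
        pot_le_tsum_ballDens hγ hσ.le μ y
    _ ≤ twoPow (γ * σ) * (2 * twoPow (γ * σ) * pot γ σ ν y +
          twoPow (γ * σ) * ∑' j : ℕ, a (k - j)) := by
        refine mul_le_mul_right ((ENNReal.tsum_le_tsum hterm).trans ?_) _
        rw [ENNReal.tsum_add]
        exact add_le_add (tsum_ballDens_le_pot hγ hσ.le ν y) hT
    _ ≤ twoPow (γ * σ) * (2 * twoPow (γ * σ) * pot γ σ ν y +
          2 * twoPow (γ * σ) * ∑' j : ℕ, a (k - j)) := by
        refine mul_le_mul_right (add_le_add_right (mul_le_mul_left ?_ _) _) _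
        exact le_mul_of_one_le_left' one_le_two
    _ = _ := by ring

lemma exists_setLIntegral_ball_pot_le [IsLocallyFiniteMeasure μ] (hγ : 0 ≤ γ) (hσ : 0 < σ)
    (hs : 1 < s)
    (hC₃ : C₃ ≠ ⊤)
    (hμ : ∀ x t, 0 < t →
      ∫⁻ y, pot γ σ (μ.restrict (ball x t)) y ^ (s / σ) ≤ C₃ * μ (ball x t)) :
    ∃ A : ℝ≥0∞, A ≠ ⊤ ∧ ∀ (k : ℤ) (x : Euc N),
      ∫⁻ y in ball x ((2 : ℝ) ^ (-k)), pot γ σ μ y ^ (s / σ) ≤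
        A * (μ (ball x ((2 : ℝ) ^ (-(k - 1)))) +
          twoPow (-(k * N)) * (∑' j : ℕ, ballDens γ μ (k - j) x ^ σ) ^ (s / σ)) := by
  have hsσ : 0 < s / σ := by positivity
  set P := (2 * twoPow (γ * σ) * twoPow (γ * σ)) ^ (s / σ) * twoPow (s / σ)
  have hP : P ≠ ⊤ := by
    have h1 := twoPow_ne_top (γ * σ)
    have h2 := twoPow_ne_top (s / σ)
    have := ENNReal.rpow_ne_top_of_nonneg hsσ.le
      (show 2 * twoPow (γ * σ) * twoPow (γ * σ) ≠ ⊤ by finiteness)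
    finiteness
  refine ⟨P * (C₃ + 3 ^ N), by finiteness, fun k x => ?_⟩
  set B := ball x ((2 : ℝ) ^ (-k))
  set B' := ball x ((2 : ℝ) ^ (-(k - 1)))
  set T := ∑' j : ℕ, ballDens γ μ (k - j) x ^ σ
  have hm : Measurable fun y => pot γ σ (μ.restrict B') y ^ (s / σ) :=
    (measurable_pot γ σ _).pow_const _
  calc ∫⁻ y in B, pot γ σ μ y ^ (s / σ)
      ≤ ∫⁻ y in B, P * (pot γ σ (μ.restrict B') y ^ (s / σ) + T ^ (s / σ)) := by
        refine setLIntegral_mono' measurableSet_ball fun y hy => ?_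
        refine (ENNReal.rpow_le_rpow (pot_le_pot_restrict_add_tsum hγ hσ k hy) hsσ.le).trans ?_
        rw [ENNReal.mul_rpow_of_nonneg _ _ hsσ.le, mul_assoc (_ ^ _)]
        exact mul_le_mul_right (add_rpow_le_twoPow_mul _ _ hsσ.le) _
    _ = P * ((∫⁻ y in B, pot γ σ (μ.restrict B') y ^ (s / σ)) + T ^ (s / σ) * volume B) := by
        rw [lintegral_const_mul' _ _ hP, lintegral_add_left hm, setLIntegral_const]
    _ ≤ P * (C₃ * μ B' + T ^ (s / σ) * (3 ^ N * twoPow (-(k * N)))) := by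
        refine mul_le_mul_right (add_le_add ?_ (mul_le_mul_right (volume_ball_zpow_le k x) _)) _
        exact (setLIntegral_le_lintegral _ _).trans (hμ x _ (by positivity))
    _ ≤ P * ((C₃ + 3 ^ N) * μ B' + (C₃ + 3 ^ N) * (twoPow (-(k * N)) * T ^ (s / σ))) := by
        refine mul_le_mul_right (add_le_add (mul_le_mul_left le_self_add _) ?_) _
        calc _ = 3 ^ N * (twoPow (-(k * N)) * T ^ (s / σ)) := by ring
          _ ≤ _ := mul_le_mul_left le_add_self _
    _ = _ := by ring

lemma rpow_ballDens_rpow_le (hσ : 0 < σ) {A : ℝ≥0∞}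
    (hA : ∀ k x, ballDens γ μ k x ^ (s - 1) ≤ A * twoPow (k * (N - γ))) (k : ℤ) (x : Euc N) :
    (ballDens γ μ k x ^ σ) ^ (s - 1) ≤ A ^ σ * twoPow (k * ((N - γ) * σ)) := by
  have := ENNReal.rpow_le_rpow (hA k x) hσ.le
  rwa [← ENNReal.rpow_mul, mul_comm (s - 1), ENNReal.rpow_mul,
    ENNReal.mul_rpow_of_nonneg _ _ hσ.le, twoPow_rpow, mul_assoc] at this

/-- The testing inequality on balls implies the pointwise inequality, everywhere. -/
lemma exists_pot_withDensity_le [IsLocallyFiniteMeasure μ] (hγ : 0 ≤ γ) (hγN : γ < N)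
    (hσ : 0 < σ) (hs : 1 < s) (hC₃ : C₃ ≠ ⊤)
    (hμ : ∀ x t, 0 < t →
      ∫⁻ y, pot γ σ (μ.restrict (ball x t)) y ^ (s / σ) ≤ C₃ * μ (ball x t)) :
    ∃ C : ℝ≥0∞, C ≠ ⊤ ∧ ∀ x : Euc N,
      pot γ σ (volume.withDensity fun y => pot γ σ μ y ^ (s / σ)) x ≤ C * pot γ σ μ x := by
  have hs0 : 0 < s := by linarith
  obtain ⟨A, hA, hAb⟩ := exists_ballDens_rpow_le hγ hσ hs hC₃ hμ
  obtain ⟨A', hA', hAint⟩ := exists_setLIntegral_ball_pot_le hγ hσ hs hC₃ hμ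
  set ε := (N - γ) * σ with hε
  have hε0 : 0 < ε := mul_pos (by linarith) hσ
  have h1 := tsum_twoPow_ne_top (show 0 < ε / s / 2 by positivity)
  have h2 := tsum_twoPow_ne_top (show 0 < ε / s / 2 * s by positivity)
  set D := A ^ σ * (∑' j : ℕ, twoPow (-(j * (ε / s / 2)))) ^ s *
        (∑' j : ℕ, twoPow (-(j * (ε / s / 2 * s))))
  have hD : D ≠ ⊤ := by
    have h3 := ENNReal.rpow_ne_top_of_nonneg hσ.le hA
    have h4 := ENNReal.rpow_ne_top_of_nonneg hs0.le h1
    finiteness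
  set V := twoPow (γ * σ)
  have hV : V ≠ ⊤ := twoPow_ne_top _
  refine ⟨V * (A' ^ σ * twoPow σ * (V + D)) * (2 * V), ?_, fun x => ?_⟩
  · have h3 := ENNReal.rpow_ne_top_of_nonneg hσ.le hA'
    have h4 := twoPow_ne_top σ
    finiteness
  set ω := (volume : Measure (Euc N)).withDensity fun y => pot γ σ μ y ^ (s / σ)
  set a : ℤ → ℝ≥0∞ := fun i => ballDens γ μ i x ^ σ
  set T : ℤ → ℝ≥0∞ := fun k => ∑' j : ℕ, a (k - j)
  have hterm : ∀ k : ℤ, ballDens γ ω k x ^ σ ≤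
      A' ^ σ * twoPow σ * (V * a (k - 1) + twoPow (-(k * ε)) * T k ^ s) := by
    intro k
    have h3 : ballDens γ ω k x ≤ A' * (twoPow γ * ballDens γ μ (k - 1) x +
        twoPow (-(k * (N - γ))) * T k ^ (s / σ)) := by
      rw [ballDens, withDensity_apply _ measurableSet_ball]
      refine (mul_le_mul_left (hAint k x) _).trans (le_of_eq ?_)
      have e1 : twoPow (k * γ) = twoPow γ * twoPow (((k - 1 : ℤ) : ℝ) * γ) := by
        rw [← twoPow_add]; push_cast; ring_nf
      have e2 : twoPow (-(k * (N - γ))) = twoPow (-(k * N)) * twoPow (k * γ) := by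
        rw [← twoPow_add]; ring_nf
      rw [e2, mul_assoc, add_mul]
      nth_rewrite 1 [e1]
      simp only [ballDens, T, a]
      ring
    refine (ENNReal.rpow_le_rpow h3 hσ.le).trans ?_
    rw [ENNReal.mul_rpow_of_nonneg _ _ hσ.le, mul_assoc]
    refine mul_le_mul_right ((add_rpow_le_twoPow_mul _ _ hσ.le).trans (le_of_eq ?_)) _
    rw [ENNReal.mul_rpow_of_nonneg _ _ hσ.le, ENNReal.mul_rpow_of_nonneg _ _ hσ.le, twoPow_rpow,
      twoPow_rpow, ← ENNReal.rpow_mul, div_mul_cancel₀ _ hσ.ne', neg_mul, mul_assoc (k : ℝ)]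
  have hconv := tsum_twoPow_mul_rpow_tsum_le hs (a := a) (rpow_ballDens_rpow_le hσ hAb · x)
  calc pot γ σ ω x ≤ V * ∑' k : ℤ, ballDens γ ω k x ^ σ := pot_le_tsum_ballDens hγ hσ.le ω x
    _ ≤ V * (A' ^ σ * twoPow σ * (V * ∑' k, a k + D * ∑' k, a k)) := by
        refine mul_le_mul_right ((ENNReal.tsum_le_tsum hterm).trans ?_) _
        rw [ENNReal.tsum_mul_left, ENNReal.tsum_add, ENNReal.tsum_mul_left]
        refine mul_le_mul_right (add_le_add (mul_le_mul_right (le_of_eq ?_) _) hconv) _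
        exact (Equiv.subRight (1 : ℤ)).tsum_eq a
    _ = V * (A' ^ σ * twoPow σ * (V + D)) * ∑' k, a k := by ring
    _ ≤ V * (A' ^ σ * twoPow σ * (V + D)) * (2 * V * pot γ σ μ x) :=
        mul_le_mul_right (tsum_ballDens_le_pot hγ hσ.le μ x) _
    _ = _ := by ring

lemma ae_pot_lt_top [IsLocallyFiniteMeasure μ] (hγ : 0 ≤ γ) (hγN : γ < N)
    (hσ : 0 < σ) (hs : 1 < s) (hC₃ : C₃ ≠ ⊤)
    (hμ : ∀ x t, 0 < t →
      ∫⁻ y, pot γ σ (μ.restrict (ball x t)) y ^ (s / σ) ≤ C₃ * μ (ball x t)) :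
    ∀ᵐ x : Euc N, pot γ σ μ x < ⊤ := by
  have hsσ : 0 < s / σ := by positivity
  obtain ⟨A, hA, hAb⟩ := exists_ballDens_rpow_le hγ hσ hs hC₃ hμ
  obtain ⟨A', hA', hAint⟩ := exists_setLIntegral_ball_pot_le hγ hσ hs hC₃ hμ
  have hball : ∀ m : ℕ, ∀ᵐ y, y ∈ ball (0 : Euc N) ((2 : ℝ) ^ (-(-(m : ℤ)))) →
      pot γ σ μ y < ⊤ := by
    intro m
    rw [← ae_restrict_iff' measurableSet_ball]
    have hfin : ∫⁻ y in ball (0 : Euc N) ((2 : ℝ) ^ (-(-(m : ℤ)))), pot γ σ μ y ^ (s / σ) ≠ ⊤ := by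
      refine ne_top_of_le_ne_top ?_ (hAint (-(m : ℤ)) 0)
      have hT := tsum_ne_top_of_rpow_le (a := fun i => ballDens γ μ i 0 ^ σ)
        (mul_pos (sub_pos.2 hγN) hσ) hs (ENNReal.rpow_ne_top_of_nonneg hσ.le hA)
        (rpow_ballDens_rpow_le hσ hAb · 0) (-(m : ℤ))
      refine ENNReal.mul_ne_top hA' (ENNReal.add_ne_top.2 ⟨measure_ball_lt_top.ne, ?_⟩)
      exact ENNReal.mul_ne_top (twoPow_ne_top _) (ENNReal.rpow_ne_top_of_nonneg hsσ.le hT)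
    filter_upwards [ae_lt_top ((measurable_pot γ σ μ).pow_const _) hfin] with y hy
    exact (ENNReal.rpow_lt_top_iff_of_pos hsσ).1 hy
  filter_upwards [ae_all_iff.2 hball] with y hy
  obtain ⟨m, hm⟩ := pow_unbounded_of_one_lt (dist y 0) (one_lt_two (α := ℝ))
  exact hy m (by rw [mem_ball, neg_neg, zpow_natCast]; exact hm)

end Testing

end Pointwise

lemma exists_pos_forall_le_ofReal_mul {ι : Type*} {F G : ι → ℝ≥0∞}
    (h : ∃ C : ℝ≥0∞, C ≠ ⊤ ∧ ∀ i, F i ≤ C * G i) :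
    ∃ C > 0, ∀ i, F i ≤ ENNReal.ofReal C * G i := by
  obtain ⟨C, hC, hFG⟩ := h
  refine ⟨C.toReal + 1, by positivity, fun i => (hFG i).trans (mul_le_mul_left ?_ _)⟩
  rw [ENNReal.le_ofReal_iff_toReal_le hC (by positivity)]
  linarith

/-- (Theorem on Wolff potential / Riesz capacity equivalences in `ℝ^N`.) -/
theorem stmt3 (N : ℕ) (α p q : ℝ) (hα : 0 < α) (hp : 1 < p) (hpN : p < (N : ℝ) / α)
    (hq : p - 1 < q) (μ : Measure (Euc N)) [IsLocallyFiniteMeasure μ] :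
    List.TFAE [
      -- (a)
      (∃ C1 > 0, ∀ K : Set (Euc N), IsCompact K →
        μ K ≤ ENNReal.ofReal C1 * rieszCap N (α * p) (q / (q - p + 1)) K),
      -- (b)
      (∃ C2 > 0, ∀ K : Set (Euc N), IsCompact K →
        (∫⁻ y in K, (wolff α p ⊤ μ y) ^ q) ≤
          ENNReal.ofReal C2 * rieszCap N (α * p) (q / (q - p + 1)) K),
      -- (c)
      (∃ C3 > 0, ∀ (x : Euc N) (t : ℝ), 0 < t →
        (∫⁻ y, (wolff α p ⊤ (μ.restrict (ball x t)) y) ^ q) ≤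
          ENNReal.ofReal C3 * μ (ball x t)),
      -- (d)
      (∃ C4 > 0, ∀ᵐ x ∂(volume : Measure (Euc N)),
        wolff α p ⊤ (volume.withDensity fun y => (wolff α p ⊤ μ y) ^ q) x ≤
          ENNReal.ofReal C4 * wolff α p ⊤ μ x ∧ wolff α p ⊤ μ x < ⊤) ] := by
  have hp1 : 0 < p - 1 := by linarith
  have hq0 : 0 < q := by linarith
  have hN : α * p < N := by rwa [lt_div_iff₀ hα, mul_comm] at hpN
  have hβ0 : 0 < α * p := by positivity
  have hσ : 0 < 1 / (p - 1) := by positivity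
  have hs : (q / (p - 1)).HolderConjugate (q / (q - p + 1)) := by
    rw [Real.holderConjugate_iff]
    refine ⟨by rwa [one_lt_div hp1], ?_⟩
    have : q - p + 1 ≠ 0 := by linarith
    field_simp
    ring
  have hqe : q / (p - 1) / (1 / (p - 1)) = q := by field_simp
  simp only [wolff_top_eq_pot]
  tfae_have 1 → 3 := by
    rintro ⟨C₁, -, h⟩
    obtain ⟨C, hC, H⟩ :=
      exists_lintegral_pot_le_of_le_rieszCap hβ0 hN.le hs hσ ENNReal.ofReal_ne_top μ h
    rw [hqe] at H
    obtain ⟨C', hC', H'⟩ := exists_pos_forall_le_ofReal_mul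
      ⟨C, hC, fun z : Euc N × ℝ => H z.1 z.2⟩
    exact ⟨C', hC', fun x t _ => H' (x, t)⟩
  tfae_have 3 → 4 := by
    rintro ⟨C₃, -, h⟩
    have hγ : 0 ≤ N - α * p := by linarith
    have hγN : N - α * p < N := by linarith
    rw [← hqe] at h
    obtain ⟨C, hC, H⟩ := exists_pos_forall_le_ofReal_mul
      (exists_pot_withDensity_le hγ hγN hσ hs.lt ENNReal.ofReal_ne_top h)
    rw [hqe] at H
    refine ⟨C, hC, ?_⟩
    filter_upwards [ae_pot_lt_top hγ hγN hσ hs.lt ENNReal.ofReal_ne_top h] with x hx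
    exact ⟨H x, hx⟩
  tfae_have 4 → 2 := by
    rintro ⟨C₄, -, h⟩
    obtain ⟨C, hC, H⟩ := exists_lintegral_pot_le_rieszCap hβ0 hN.le hs hσ
      (ENNReal.ofReal_ne_top (r := C₄)) μ (by rwa [hqe])
    rw [hqe] at H
    obtain ⟨C', hC', H'⟩ := exists_pos_forall_le_ofReal_mul
      ⟨C, hC, fun K : {K : Set (Euc N) // IsCompact K} => H K.1 K.2⟩
    exact ⟨C', hC', fun K hK => H' ⟨K, hK⟩⟩
  tfae_have 2 → 1 := by
    rintro ⟨C₂, -, h⟩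
    obtain ⟨C, hC, H⟩ := exists_le_rieszCap_of_lintegral_pot_le hβ0 hN.le hs hσ
      (ENNReal.ofReal_ne_top (r := C₂)) μ (by rwa [hqe])
    obtain ⟨C', hC', H'⟩ := exists_pos_forall_le_ofReal_mul
      ⟨C, hC, fun K : {K : Set (Euc N) // IsCompact K} => H K.1 K.2⟩
    exact ⟨C', hC', fun K hK => H' ⟨K, hK⟩⟩
  tfae_finish
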